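/- Let 1 < p < q < p*. For every open bounded convex set Ω ⊂ ℝ^N and every open ball B ⊂ ℝ^N one has the strict inequality μ_{p,q}(Ω) < λ_{p,q}(B) · (diam(B)/diam(Ω))^{p + Np/q − N}. -/

import Mathlib

open MeasureTheory Metric Set Real

noncomputable section

/-- The Rayleigh quotient `(∫_Ω |∇v|^p) / (∫_Ω |v|^q)^(p/q)`, where the gradient is
understood as the (a.e. defined) Fréchet derivative. -/
def rayleighQuot {N : ℕ} (p q : ℝ) (Ω : Set (EuclideanSpace ℝ (Fin N)))
    (v : EuclideanSpace ℝ (Fin N) → ℝ) : ℝ :=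
  (∫ x in Ω, ‖fderiv ℝ v x‖ ^ p) / (∫ x in Ω, |v x| ^ q) ^ (p / q)

/-- The first (generalized) Dirichlet eigenvalue `λ_{p,q}(Ω)`: infimum of the Rayleigh
quotient over nontrivial smooth functions compactly supported in `Ω`. -/
def lambdaPQ {N : ℕ} (p q : ℝ) (Ω : Set (EuclideanSpace ℝ (Fin N))) : ℝ :=
  sInf { R : ℝ | ∃ v : EuclideanSpace ℝ (Fin N) → ℝ,
    ContDiff ℝ (⊤ : ℕ∞) v ∧ HasCompactSupport v ∧ tsupport v ⊆ Ω ∧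
    (∃ x ∈ Ω, v x ≠ 0) ∧ R = rayleighQuot p q Ω v }

/-- The first nontrivial (generalized) Neumann eigenvalue `μ_{p,q}(Ω)`: infimum of the
Rayleigh quotient over nontrivial Lipschitz functions on the closure of `Ω` satisfying
the constraint `∫_Ω |v|^(q-2) v = 0`. -/
def muPQ {N : ℕ} (p q : ℝ) (Ω : Set (EuclideanSpace ℝ (Fin N))) : ℝ :=
  sInf { R : ℝ | ∃ v : EuclideanSpace ℝ (Fin N) → ℝ, ∃ K : NNReal,
    LipschitzOnWith K v (closure Ω) ∧ (∃ x ∈ Ω, v x ≠ 0) ∧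
    (∫ x in Ω, |v x| ^ (q - 2) * v x) = 0 ∧ R = rayleighQuot p q Ω v }

/-- `q` is below the critical Sobolev exponent `p* = Np/(N-p)` (with `p* = ∞` if `p ≥ N`). -/
def ltCritical (N : ℕ) (p q : ℝ) : Prop := p < N → q < N * p / (N - p)

end

open MeasureTheory Metric Set Real

open Filter Topology in
lemma fderiv_dom {E : Type*} [NormedAddCommGroup E] [NormedSpace ℝ E] {g w : E → ℝ} {x : E}
    (h : ∀ y, |g y - g x| ≤ |w y - w x|) (hw : DifferentiableAt ℝ w x) :
    ‖fderiv ℝ g x‖ ≤ ‖fderiv ℝ w x‖ := by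
  by_cases hg : DifferentiableAt ℝ g x
  · refine ContinuousLinearMap.opNorm_le_bound _ (norm_nonneg _) fun z => ?_
    have key : ∀ f : E → ℝ, DifferentiableAt ℝ f x →
        Tendsto (fun t : ℝ => |t⁻¹ * (f (x + t • z) - f x)|) (𝓝[≠] 0) (𝓝 |fderiv ℝ f x z|) := by
      intro f hf
      have := (hf.hasFDerivAt.hasLineDerivAt z).tendsto_slope_zero
      simpa using this.abs
    refine le_trans ?_ ((fderiv ℝ w x).le_opNorm z)
    refine le_of_tendsto_of_tendsto' (key g hg) (key w hw) fun t => ?_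
    rw [abs_mul, abs_mul]
    exact mul_le_mul_of_nonneg_left (h _) (abs_nonneg _)
  · rw [fderiv_zero_of_not_differentiableAt hg]; simp

open Filter Topology in
lemma seqcpt {E : Type*} [NormedAddCommGroup E] [NormedSpace ℝ E] [FiniteDimensional ℝ E]
    (w : ℕ → E → ℝ) (K : NNReal) (M : ℝ)
    (hK : ∀ n, LipschitzWith K (w n)) (hM : ∀ n x, w n x ∈ Icc 0 M) :
    ∃ (g : E → ℝ) (φ : ℕ → ℕ), StrictMono φ ∧
      ∀ x, Tendsto (fun n => w (φ n) x) atTop (𝓝 (g x)) := by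
  have : ProperSpace E := FiniteDimensional.proper_real E
  let S : Set C(E, ℝ) := {f | LipschitzWith K f ∧ ∀ x, f x ∈ Icc 0 M}
  have hc : IsCompact S := by
    refine ArzelaAscoli.isCompact_of_equicontinuous S ?_ ?_
    · have : ContinuousMap.toFun '' S = {f : E → ℝ | LipschitzWith K f} ∩ 
          (Set.pi univ fun _ => Icc 0 M) := by
        ext f
        constructor
        · rintro ⟨g, hg, rfl⟩
          exact ⟨hg.1, fun x _ => hg.2 x⟩
        · rintro ⟨h1, h2⟩
          exact ⟨⟨f, h1.continuous⟩, ⟨h1, fun x => h2 x trivial⟩, rfl⟩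
      rw [this]
      refine (isCompact_univ_pi fun _ => isCompact_Icc).inter_left ?_
      simp only [lipschitzWith_iff_dist_le_mul]
      simp only [ofPred_forall]
      refine isClosed_iInter fun x => isClosed_iInter fun y => ?_
      exact isClosed_le (by fun_prop) (by fun_prop)
    · have := LipschitzWith.uniformEquicontinuous (fun f : S => (f.1 : E → ℝ)) K (fun f => f.2.1)
      exact this.equicontinuous
  obtain ⟨g, -, φ, hφ, hl⟩ := hc.isSeqCompact (x := fun n => (⟨w n, (hK n).continuous⟩ : C(E, ℝ)))
    (fun n => ⟨hK n, hM n⟩)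
  refine ⟨g, φ, hφ, fun x => ?_⟩
  exact ((continuous_eval_const (F := C(E, ℝ)) x).tendsto g).comp hl

section
variable {E : Type*} [NormedAddCommGroup E] [InnerProductSpace ℝ E] 

/-- reflection -/
noncomputable def sg (n : E) (t : ℝ) (x : E) : E := x - (2 * (inner ℝ n x - t)) • n

lemma sg_inner {n : E} (hn : ‖n‖ = 1) (t : ℝ) (x : E) :
    inner ℝ n (sg n t x) - t = - (inner ℝ n x - t) := by
  simp [sg, inner_sub_right, inner_smul_right, hn]; ring

lemma sg_sg {n : E} (hn : ‖n‖ = 1) (t : ℝ) (x : E) : sg n t (sg n t x) = x := by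
  have := sg_inner hn t x
  rw [sg, this, sg]
  module

lemma sg_norm_sub {n : E} (hn : ‖n‖ = 1) (t : ℝ) (x y : E) :
    ‖x - sg n t y‖ ^ 2 = ‖x - y‖ ^ 2 + 4 * (inner ℝ n x - t) * (inner ℝ n y - t) := by
  have : x - sg n t y = (x - y) + (2 * (inner ℝ n y - t)) • n := by rw [sg]; module
  rw [this, norm_add_sq_real, norm_smul, hn, inner_smul_right, inner_sub_left,
    real_inner_comm n x, real_inner_comm n y, mul_one, Real.norm_eq_abs, sq_abs]
  ring

lemma sg_dist {n : E} (hn : ‖n‖ = 1) (t : ℝ) (x y : E) :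
    ‖sg n t x - sg n t y‖ = ‖x - y‖ := by
  have h1 := sg_norm_sub hn t (sg n t x) y
  have h2 := sg_norm_sub hn t y x
  rw [sg_inner hn] at h1
  rw [norm_sub_rev] at h2
  have : ‖sg n t x - sg n t y‖ ^ 2 = ‖x - y‖ ^ 2 := by
    rw [h1, h2, norm_sub_rev]; ring
  exact (pow_left_inj₀ (norm_nonneg _) (norm_nonneg _) two_ne_zero).1 this

lemma sg_norm {n : E} (hn : ‖n‖ = 1) (t : ℝ) (x : E) :
    ‖sg n t x‖ ^ 2 = ‖x‖ ^ 2 - 4 * t * (inner ℝ n x - t) := by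
  have := sg_norm_sub hn t 0 x
  simp at this
  rw [this]; ring

lemma sg_cont (n : E) (t : ℝ) : Continuous (sg n t) := by
  unfold sg; fun_prop

lemma sg_mp [FiniteDimensional ℝ E] [MeasurableSpace E] [BorelSpace E] {n : E} (hn : ‖n‖ = 1)
    (t : ℝ) : MeasurePreserving (sg n t) (volume : Measure E) volume := by
  have h1 : sg n t = (fun x => x + (2 * t) • n) ∘ ((ℝ ∙ n)ᗮ.reflection) := by
    ext x
    simp only [Function.comp, sg, Submodule.reflection_orthogonal_apply,
      Submodule.reflection_singleton_apply, hn]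
    simp
    module
  rw [h1]
  exact (measurePreserving_add_right _ _).comp ((ℝ ∙ n)ᗮ.reflection).measurePreserving

/-- polarization -/
noncomputable def pol (n : E) (t : ℝ) (w : E → ℝ) (x : E) : ℝ :=
  if inner ℝ n x ≤ t then max (w x) (w (sg n t x)) else min (w x) (w (sg n t x))

lemma pol_lip {n : E} (hn : ‖n‖ = 1) (t : ℝ) {w : E → ℝ} {K : NNReal} (hw : LipschitzWith K w) :
    LipschitzWith K (pol n t w) := by
  have hw' : ∀ x y, |w x - w y| ≤ K * ‖x - y‖ := fun x y => by
    have := hw.dist_le_mul x y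
    rwa [Real.dist_eq, dist_eq_norm] at this
  refine LipschitzWith.of_dist_le_mul fun x y => ?_
  rw [Real.dist_eq, dist_eq_norm]
  have h1 := hw' x y
  have h2 := hw' (sg n t x) (sg n t y)
  rw [sg_dist hn] at h2
  have h3 : (inner ℝ n x - t) * (inner ℝ n y - t) ≤ 0 → ‖x - sg n t y‖ ≤ ‖x - y‖ := fun h => by
    have := sg_norm_sub hn t x y
    exact abs_le_of_sq_le_sq' (by nlinarith) (norm_nonneg _) |>.2
  have h4 : (inner ℝ n x - t) * (inner ℝ n y - t) ≤ 0 → |w x - w (sg n t y)| ≤ K * ‖x - y‖ :=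
    fun h => (hw' _ _).trans (mul_le_mul_of_nonneg_left (h3 h) K.2)
  have h5 : (inner ℝ n x - t) * (inner ℝ n y - t) ≤ 0 → |w (sg n t x) - w y| ≤ K * ‖x - y‖ :=
    fun h => by
      refine (hw' _ _).trans (mul_le_mul_of_nonneg_left ?_ K.2)
      have := sg_dist hn t x (sg n t y)
      rw [sg_sg hn] at this
      rw [this]; exact h3 h
  unfold pol
  by_cases hx : inner ℝ n x ≤ t <;> by_cases hy : inner ℝ n y ≤ t <;>
    simp only [hx, hy, if_true, if_false]
  · exact (abs_max_sub_max_le_max _ _ _ _).trans (max_le h1 h2)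
  · have := h4 (mul_nonpos_of_nonpos_of_nonneg (by linarith) (by linarith))
    have := h5 (mul_nonpos_of_nonpos_of_nonneg (by linarith) (by linarith))
    simp only [abs_le] at *
    rcases max_choice (w x) (w (sg n t x)) with h | h <;>
    rcases min_choice (w y) (w (sg n t y)) with h' | h' <;> rw [h, h'] <;> constructor <;> linarith
  · have := h4 (mul_nonpos_of_nonneg_of_nonpos (by linarith) (by linarith))
    have := h5 (mul_nonpos_of_nonneg_of_nonpos (by linarith) (by linarith))
    simp only [abs_le] at *
    rcases min_choice (w x) (w (sg n t x)) with h | h <;>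
    rcases max_choice (w y) (w (sg n t y)) with h' | h' <;> rw [h, h'] <;> constructor <;> linarith
  · exact (abs_min_sub_min_le_max _ _ _ _).trans (max_le h1 h2)

/-- the values of the polarization at a pair of reflected points -/
lemma pol_pair {n : E} (hn : ‖n‖ = 1) (t : ℝ) (w : E → ℝ) (x : E) :
    (inner ℝ n x ≤ t ∧ pol n t w x = max (w x) (w (sg n t x)) ∧
      pol n t w (sg n t x) = min (w x) (w (sg n t x))) ∨
    (t ≤ inner ℝ n x ∧ pol n t w x = min (w x) (w (sg n t x)) ∧
      pol n t w (sg n t x) = max (w x) (w (sg n t x))) := by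
  have h := sg_inner hn t x
  unfold pol
  rw [sg_sg hn]
  rcases lt_trichotomy (inner ℝ n x) t with h1 | h1 | h1
  · left
    have h2 : ¬ inner ℝ n (sg n t x) ≤ t := by linarith
    rw [if_pos h1.le, if_neg h2, min_comm]
    exact ⟨h1.le, rfl, rfl⟩
  · left
    have : sg n t x = x := by simp [sg, h1]
    rw [this]; simp [h1]
  · right
    have h2 : inner ℝ n (sg n t x) ≤ t := by linarith
    rw [if_neg (not_le.2 h1), if_pos h2, max_comm]
    exact ⟨h1.le, rfl, rfl⟩

end

lemma convexOn_abs_rpow {p : ℝ} (hp : 1 ≤ p) : ConvexOn ℝ univ (fun x : ℝ => |x| ^ p) := by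
  refine ⟨convex_univ, fun x _ y _ a b ha hb hab => ?_⟩
  have h1 : |a • x + b • y| ≤ a * |x| + b * |y| := by
    refine (abs_add_le _ _).trans ?_
    simp [abs_mul, abs_of_nonneg ha, abs_of_nonneg hb]
  refine (Real.rpow_le_rpow (abs_nonneg _) h1 (by linarith)).trans ?_
  exact (convexOn_rpow hp).2 (abs_nonneg x) (abs_nonneg y) ha hb hab

lemma majo {φ : ℝ → ℝ} (hφ : ConvexOn ℝ univ φ) {x y z w : ℝ} (h1 : x ≤ y) (h2 : x ≤ z)
    (h : x + w = y + z) : φ y + φ z ≤ φ x + φ w := by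
  rcases eq_or_lt_of_le (show x ≤ w by linarith) with hw | hw
  · have : y = x := by linarith
    have : z = x := by linarith
    subst y; subst z; rw [← hw]
  have hd : 0 < w - x := by linarith
  have e1 := hφ.2 (mem_univ x) (mem_univ w) 
    (div_nonneg (by linarith : 0 ≤ w - y) hd.le) (div_nonneg (by linarith : 0 ≤ y - x) hd.le) (by field_simp; ring)
  have e2 := hφ.2 (mem_univ x) (mem_univ w) 
    (div_nonneg (by linarith : 0 ≤ w - z) hd.le) (div_nonneg (by linarith : 0 ≤ z - x) hd.le) (by field_simp; ring)
  have f1 : ((w - y) / (w - x)) • x + ((y - x) / (w - x)) • w = y := by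
    simp only [smul_eq_mul]; field_simp; ring
  have f2 : ((w - z) / (w - x)) • x + ((z - x) / (w - x)) • w = z := by
    simp only [smul_eq_mul]; field_simp; ring
  rw [f1] at e1; rw [f2] at e2
  simp only [smul_eq_mul] at e1 e2
  have : (w - y) / (w - x) + (w - z) / (w - x) = 1 := by field_simp; linarith
  have h4 : (y - x) / (w - x) + (z - x) / (w - x) = 1 := by field_simp; linarith
  calc φ y + φ z ≤ _ := add_le_add e1 e2
    _ = ((w - y) / (w - x) + (w - z) / (w - x)) * φ x +
      ((y - x) / (w - x) + (z - x) / (w - x)) * φ w := by ring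
    _ = _ := by rw [this, h4]; ring

lemma two_point {p : ℝ} (hp : 1 ≤ p) {a a' b b' : ℝ} (h1 : a' ≤ a) (h2 : b ≤ b') :
    |a - b'| ^ p + |a' - b| ^ p ≤ |a - b| ^ p + |a' - b'| ^ p := by
  have := majo (convexOn_abs_rpow hp) (x := a' - b') (y := a - b') (z := a' - b) (w := a - b)
    (by linarith) (by linarith) (by ring)
  simpa [add_comm] using this

open MeasureTheory Metric Set Real

lemma pol_comb {p : ℝ} (hp : 1 ≤ p) {k1 k2 : ℝ} (hk : k2 ≤ k1) (a a' b b' : ℝ) :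
    k1 * (|max a a' - max b b'| ^ p + |min a a' - min b b'| ^ p) +
      k2 * (|max a a' - min b b'| ^ p + |min a a' - max b b'| ^ p) ≤
    k1 * (|a - b| ^ p + |a' - b'| ^ p) + k2 * (|a - b'| ^ p + |a' - b| ^ p) := by
  rcases le_total a a' with ha | ha <;> rcases le_total b b' with hb | hb <;>
    simp only [max_eq_left, max_eq_right, min_eq_left, min_eq_right, ha, hb]
  · linarith
  · have := two_point hp ha hb
    nlinarith
  · have := two_point hp ha hb
    nlinarith
  · linarith

section
variable {E : Type*} [NormedAddCommGroup E] [InnerProductSpace ℝ E] [FiniteDimensional ℝ E]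
  [MeasurableSpace E] [BorelSpace E]

/-- integrand of nonlocal energy -/
noncomputable def enI (p h : ℝ) (w : E → ℝ) (z : E × E) : ℝ :=
  (if ‖z.1 - z.2‖ < h then 1 else 0) * |w z.1 - w z.2| ^ p

/-- nonlocal energy -/
noncomputable def En (p h : ℝ) (w : E → ℝ) : ENNReal :=
  ∫⁻ z : E × E, ENNReal.ofReal (enI p h w z)

lemma enI_nonneg (p h : ℝ) (w : E → ℝ) (z : E × E) : 0 ≤ enI p h w z := by
  unfold enI; split_ifs <;> positivity

lemma enI_meas (p h : ℝ) {w : E → ℝ} (hw : Continuous w) : Measurable (enI p h w) := by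
  unfold enI
  refine Measurable.mul ?_ ?_
  · refine Measurable.ite ?_ measurable_const measurable_const
    exact (isOpen_lt (by fun_prop) (by fun_prop)).measurableSet
  · exact ((hw.measurable.comp measurable_fst).sub
      (hw.measurable.comp measurable_snd)).abs.pow_const _

lemma enI_pt {p : ℝ} (hp : 1 ≤ p) (h : ℝ) {n : E} (hn : ‖n‖ = 1) (t : ℝ) (w : E → ℝ) (x y : E) :
    enI p h (pol n t w) (x, y) + enI p h (pol n t w) (sg n t x, sg n t y) +
      (enI p h (pol n t w) (x, sg n t y) + enI p h (pol n t w) (sg n t x, y)) ≤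
    enI p h w (x, y) + enI p h w (sg n t x, sg n t y) +
      (enI p h w (x, sg n t y) + enI p h w (sg n t x, y)) := by
  have e2 : ‖sg n t x - y‖ = ‖x - sg n t y‖ := by
    have := sg_dist hn t x (sg n t y)
    rwa [sg_sg hn] at this
  simp only [enI, sg_dist hn, e2]
  have hs := sg_norm_sub hn t x y
  set k1 : ℝ := if ‖x - y‖ < h then 1 else 0 with hk1
  set k2 : ℝ := if ‖x - sg n t y‖ < h then 1 else 0 with hk2
  have m1 : 0 ≤ (inner ℝ n x - t) * (inner ℝ n y - t) → k2 ≤ k1 := fun hh => by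
    have : ‖x - y‖ ≤ ‖x - sg n t y‖ := abs_le_of_sq_le_sq' (by nlinarith) (norm_nonneg _) |>.2
    rw [hk1, hk2]; split_ifs <;> linarith
  have m2 : (inner ℝ n x - t) * (inner ℝ n y - t) ≤ 0 → k1 ≤ k2 := fun hh => by
    have : ‖x - sg n t y‖ ≤ ‖x - y‖ := abs_le_of_sq_le_sq' (by nlinarith) (norm_nonneg _) |>.2
    rw [hk1, hk2]; split_ifs <;> linarith
  rcases pol_pair hn t w x with ⟨hx, hx1, hx2⟩ | ⟨hx, hx1, hx2⟩ <;>
  rcases pol_pair hn t w y with ⟨hy, hy1, hy2⟩ | ⟨hy, hy1, hy2⟩ <;>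
  rw [hx1, hx2, hy1, hy2]
  · have := pol_comb hp (m1 (mul_nonneg_of_nonpos_of_nonpos (by linarith) (by linarith)))
      (w x) (w (sg n t x)) (w y) (w (sg n t y))
    linarith
  · have := pol_comb hp (m2 (mul_nonpos_of_nonpos_of_nonneg (by linarith) (by linarith)))
      (w x) (w (sg n t x)) (w (sg n t y)) (w y)
    rw [max_comm (w (sg n t y)), min_comm (w (sg n t y))] at this
    linarith
  · have := pol_comb hp (m2 (mul_nonpos_of_nonneg_of_nonpos (by linarith) (by linarith)))
      (w x) (w (sg n t x)) (w (sg n t y)) (w y)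
    rw [max_comm (w (sg n t y)), min_comm (w (sg n t y))] at this
    linarith
  · have := pol_comb hp (m1 (mul_nonneg (by linarith) (by linarith)))
      (w x) (w (sg n t x)) (w y) (w (sg n t y))
    linarith

lemma En_four (p h : ℝ) {n : E} (hn : ‖n‖ = 1) (t : ℝ) {w : E → ℝ} (hw : Continuous w) :
    4 * En p h w = ∫⁻ z : E × E, ENNReal.ofReal
      (enI p h w (z.1, z.2) + enI p h w (sg n t z.1, sg n t z.2) +
      (enI p h w (z.1, sg n t z.2) + enI p h w (sg n t z.1, z.2))) := by
  have hm := sg_mp hn t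
  have hid := MeasurePreserving.id (volume : Measure E)
  have hI := (enI_meas p h hw)
  have hI' := hI.ennreal_ofReal
  have c1 := (hm.prod hm).lintegral_comp hI'
  have c2 := (hid.prod hm).lintegral_comp hI'
  have c3 := (hm.prod hid).lintegral_comp hI'
  rw [← Measure.volume_eq_prod] at c1 c2 c3
  have n1 := enI_nonneg (E := E) p h w
  have hsm := (sg_cont n t).measurable
  simp_rw [ENNReal.ofReal_add (add_nonneg (n1 _) (n1 _)) (add_nonneg (n1 _) (n1 _)),
    ENNReal.ofReal_add (n1 _) (n1 _)]
  have M : ∀ g : E × E → E × E, Measurable g → Measurable fun z => ENNReal.ofReal (enI p h w (g z)) :=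
    fun g hg => hI'.comp hg
  rw [lintegral_add_left, lintegral_add_left, lintegral_add_left]
  · simp only [Prod.map, id] at c1 c2 c3
    rw [c1, c2, c3]
    change 4 * En p h w = (En p h w + En p h w) + (En p h w + En p h w)
    ring
  · exact M _ (by fun_prop)
  · exact M _ (by fun_prop)
  · exact (M (fun z => (z.1, z.2)) (by fun_prop)).add (M _ (by fun_prop))

lemma En_pol {p : ℝ} (hp : 1 ≤ p) (h : ℝ) {n : E} (hn : ‖n‖ = 1) (t : ℝ) {w : E → ℝ}
    (hw : Continuous w) (hw' : Continuous (pol n t w)) : En p h (pol n t w) ≤ En p h w := by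
  have : 4 * En p h (pol n t w) ≤ 4 * En p h w := by
    rw [En_four p h hn t hw, En_four p h hn t hw']
    exact lintegral_mono fun z => ENNReal.ofReal_le_ofReal (enI_pt hp h hn t w _ _)
  rwa [ENNReal.mul_le_mul_iff_right (by norm_num) (by norm_num)] at this

lemma integral_two {n : E} (hn : ‖n‖ = 1) (t : ℝ) {f : E → ℝ} (hf : Integrable f) :
    2 * ∫ x, f x = ∫ x, (f x + f (sg n t x)) := by
  have hm := sg_mp hn t
  have h1 : ∫ x, f (sg n t x) = ∫ x, f x := by
    have := hm.map_eq
    conv_rhs => rw [← this]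
    rw [integral_map hm.measurable.aemeasurable]
    rw [this]; exact hf.aestronglyMeasurable
  have h2 : Integrable fun x => f (sg n t x) := hm.integrable_comp_of_integrable hf
  rw [integral_add hf h2, h1]; ring

lemma pol_int {n : E} (hn : ‖n‖ = 1) (t : ℝ) {w : E → ℝ} (F : ℝ → ℝ)
    (hw : Integrable fun x => F (w x)) (hw' : Integrable fun x => F (pol n t w x)) :
    ∫ x, F (pol n t w x) = ∫ x, F (w x) := by
  have h1 := integral_two hn t hw
  have h2 := integral_two hn t hw'
  have : ∀ x, F (pol n t w x) + F (pol n t w (sg n t x)) = F (w x) + F (w (sg n t x)) := by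
    intro x
    rcases pol_pair hn t w x with ⟨-, h1, h2⟩ | ⟨-, h1, h2⟩ <;> rw [h1, h2] <;>
    rcases le_total (w x) (w (sg n t x)) with h | h <;> simp [h, add_comm]
  simp_rw [this] at h2
  linarith

/-- strict decrease of the second moment -/
lemma pol_moment {n : E} (hn : ‖n‖ = 1) {t : ℝ} (ht : 0 < t) {w : E → ℝ}
    (hw : Continuous w) (hw' : Continuous (pol n t w)) (hc : HasCompactSupport w)
    (hc' : HasCompactSupport (pol n t w))
    (hmin : ∫ x, w x * ‖x‖ ^ 2 ≤ ∫ x, pol n t w x * ‖x‖ ^ 2) (x : E) (hx : inner ℝ n x < t) :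
    w (sg n t x) ≤ w x := by
  by_contra hlt
  push Not at hlt
  set f : E → ℝ := fun x => w x * ‖x‖ ^ 2 - pol n t w x * ‖x‖ ^ 2 with hf
  have hfc : Continuous f := by fun_prop
  have i1 : Integrable fun x => w x * ‖x‖ ^ 2 :=
    Continuous.integrable_of_hasCompactSupport (by fun_prop) hc.mul_right
  have i2 : Integrable fun x => pol n t w x * ‖x‖ ^ 2 :=
    Continuous.integrable_of_hasCompactSupport (by fun_prop) hc'.mul_right
  have hfs : HasCompactSupport f := hc.mul_right.sub hc'.mul_right
  have hfi : Integrable f := i1.sub i2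
  have h2 := integral_two hn t hfi
  have h3 : ∫ x, f x ≤ 0 := by
    rw [hf, integral_sub i1 i2]; linarith
  set G : E → ℝ := fun x => f x + f (sg n t x) with hG
  have hGval : ∀ x, G x = (w x - pol n t w x) * (4 * t * (inner ℝ n x - t)) := by
    intro x
    have e : ‖sg n t x‖ ^ 2 = _ := sg_norm hn t x
    simp only [hG, hf, e]
    have : pol n t w (sg n t x) = w x + w (sg n t x) - pol n t w x := by
      rcases pol_pair hn t w x with ⟨-, h1, h2⟩ | ⟨-, h1, h2⟩ <;> rw [h1, h2] <;>
      rcases le_total (w x) (w (sg n t x)) with h | h <;> simp [h]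
    rw [this]; ring
  have hG0 : 0 ≤ G := by
    intro x
    rw [hGval]
    rcases pol_pair hn t w x with ⟨h0, h1, h2⟩ | ⟨h0, h1, h2⟩ <;> rw [h1]
    · exact mul_nonneg_of_nonpos_of_nonpos (by linarith [le_max_left (w x) (w (sg n t x))])
        (by nlinarith)
    · exact mul_nonneg (by linarith [min_le_left (w x) (w (sg n t x))]) (by nlinarith)
  have hGc : Continuous G := by
    have := sg_cont n t
    fun_prop
  have hGs : HasCompactSupport G := by
    refine hfs.add ?_
    have hsg : Topology.IsClosedEmbedding (sg n t) :=
      (Homeomorph.mk ⟨sg n t, sg n t, sg_sg hn t, sg_sg hn t⟩ (sg_cont n t) (sg_cont n t)).isClosedEmbedding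
    exact hfs.comp_isClosedEmbedding hsg
  have hGx : G x ≠ 0 := by
    rw [hGval]
    have : pol n t w x = w (sg n t x) := by
      unfold pol; rw [if_pos hx.le, max_eq_right hlt.le]
    rw [this]
    have h5 : inner ℝ n x - t < 0 := by linarith
    have h6 : w x - w (sg n t x) < 0 := by linarith
    exact mul_ne_zero h6.ne (mul_ne_zero (by positivity) h5.ne)
  have := hGc.integral_pos_of_hasCompactSupport_nonneg_nonzero hGs hG0 hGx (μ := volume)
  linarith
end

open MeasureTheory Metric Set Real

section
variable {E : Type*} [NormedAddCommGroup E] [InnerProductSpace ℝ E] [FiniteDimensional ℝ E]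
  [MeasurableSpace E] [BorelSpace E]

/-- the class of competitors -/
structure XC (K : NNReal) (R M p q : ℝ) (v w : E → ℝ) : Prop where
  lip : LipschitzWith K w
  nonneg : ∀ x, 0 ≤ w x
  le : ∀ x, w x ≤ M
  zero : ∀ x, R ≤ ‖x‖ → w x = 0
  int : ∫ x, w x ^ q = ∫ x, v x ^ q
  en : ∀ h, En p h w ≤ En p h v

lemma cs_of_zero {R : ℝ} {w : E → ℝ} (h : ∀ x, R ≤ ‖x‖ → w x = 0) : HasCompactSupport w := by
  have : ProperSpace E := FiniteDimensional.proper_real E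
  refine HasCompactSupport.intro (isCompact_closedBall 0 R) fun x hx => h x ?_
  simp at hx; exact hx.le

lemma int_rpow {R q : ℝ} (hq : 0 < q) {w : E → ℝ} (hw : Continuous w)
    (h : ∀ x, R ≤ ‖x‖ → w x = 0) : Integrable fun x => w x ^ q := by
  refine Continuous.integrable_of_hasCompactSupport (hw.rpow_const fun x => Or.inr hq.le) ?_
  exact cs_of_zero (R := R) fun x hx => by rw [h x hx, zero_rpow hq.ne']

lemma XC.pol {K : NNReal} {R M p q : ℝ} (hp : 1 ≤ p) (hq : 0 < q) {v w : E → ℝ}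
    (h : XC K R M p q v w) {n : E} (hn : ‖n‖ = 1) {t : ℝ} (ht : 0 < t) :
    XC K R M p q v (pol n t w) := by
  have hl := pol_lip hn t h.lip
  have hz : ∀ x, R ≤ ‖x‖ → _root_.pol n t w x = 0 := by
    intro x hx
    unfold _root_.pol
    split_ifs with h1
    · have h2 := sg_norm hn t x
      have : ‖x‖ ≤ ‖sg n t x‖ := abs_le_of_sq_le_sq' (by nlinarith) (norm_nonneg _) |>.2
      rw [h.zero x hx, h.zero _ (hx.trans this), max_self]
    · rw [h.zero x hx, min_eq_left (h.nonneg _)]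
  refine ⟨hl, fun x => ?_, fun x => ?_, hz, ?_, fun s => ?_⟩
  · unfold _root_.pol
    have := h.nonneg x
    have := h.nonneg (sg n t x)
    split_ifs
    · exact le_max_of_le_left (by assumption)
    · exact le_min (by assumption) (by assumption)
  · unfold _root_.pol
    have := h.le x
    have := h.le (sg n t x)
    split_ifs
    · exact max_le (by assumption) (by assumption)
    · exact min_le_of_left_le (by assumption)
  · rw [← h.int]
    exact pol_int hn t (fun s => s ^ q) (int_rpow hq h.lip.continuous h.zero)
      (int_rpow hq hl.continuous hz)
  · exact (En_pol hp s hn t h.lip.continuous hl.continuous).trans (h.en s)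

open Filter Topology

lemma dom_conv {R M : ℝ} {f : ℕ → E → ℝ} {g : E → ℝ} (hf : ∀ n, Continuous (f n))
    (hM : ∀ n x, |f n x| ≤ M) (hz : ∀ n x, R ≤ ‖x‖ → f n x = 0)
    (hl : ∀ x, Tendsto (fun n => f n x) atTop (𝓝 (g x))) :
    Tendsto (fun n => ∫ x, f n x) atTop (𝓝 (∫ x, g x)) := by
  have : ProperSpace E := FiniteDimensional.proper_real E
  refine tendsto_integral_of_dominated_convergence (fun x => (closedBall (0 : E) R).indicator (fun _ => M) x)
    (fun n => (hf n).aestronglyMeasurable) ?_ ?_ ?_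
  · rw [integrable_indicator_iff measurableSet_closedBall]
    refine integrableOn_const ?_
    exact (isCompact_closedBall (0 : E) R).measure_lt_top.ne
  · intro n
    refine Eventually.of_forall fun x => ?_
    by_cases hx : x ∈ closedBall (0 : E) R
    · rw [indicator_of_mem hx]; exact hM n x
    · rw [indicator_of_notMem hx]
      simp at hx
      rw [hz n x hx.le]; simp
  · exact Eventually.of_forall hl

lemma XC.limit {K : NNReal} {R M p q : ℝ} (hp : 1 ≤ p) (hq : 0 < q) {v : E → ℝ} {f : ℕ → E → ℝ}
    {g : E → ℝ} (h : ∀ n, XC K R M p q v (f n))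
    (hl : ∀ x, Tendsto (fun n => f n x) atTop (𝓝 (g x))) : XC K R M p q v g := by
  have hgl : LipschitzWith K g := by
    refine LipschitzWith.of_dist_le_mul fun x y => ?_
    exact le_of_tendsto' ((hl x).dist (hl y)) fun n => (h n).lip.dist_le_mul x y
  refine ⟨hgl, fun x => ge_of_tendsto' (hl x) fun n => (h n).nonneg x,
    fun x => le_of_tendsto' (hl x) fun n => (h n).le x,
    fun x hx => tendsto_nhds_unique (hl x) (by simp [fun n => (h n).zero x hx]), ?_, fun s => ?_⟩
  · have := dom_conv (R := R) (M := M ^ q) (f := fun n x => f n x ^ q) (g := fun x => g x ^ q)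
      (fun n => (h n).lip.continuous.rpow_const fun x => Or.inr hq.le) (fun n x => ?_)
      (fun n x hx => by simp only [(h n).zero x hx, zero_rpow hq.ne']) (fun x => (hl x).rpow_const (Or.inr hq.le))
    · exact tendsto_nhds_unique this (by simp [fun n => (h n).int])
    · have := (h n).nonneg x
      rw [abs_of_nonneg (by positivity)]
      exact rpow_le_rpow this ((h n).le x) hq.le
  · have e : En p s g = ∫⁻ z, liminf (fun n => ENNReal.ofReal (enI p s (f n) z)) atTop := by
      refine lintegral_congr fun z => ?_
      refine (Tendsto.liminf_eq ?_).symm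
      refine (ENNReal.continuous_ofReal.tendsto _).comp ?_
      unfold enI
      exact (((hl z.1).sub (hl z.2)).abs.rpow_const (Or.inr (by linarith))).const_mul _
    rw [e]
    refine (lintegral_liminf_le fun n => (enI_meas p s (h n).lip.continuous).ennreal_ofReal).trans ?_
    refine (liminf_le_liminf (v := fun _ => En p s v) (Eventually.of_forall fun n => (h n).en s)).trans ?_
    simp

lemma mono_of_pol {w : E → ℝ} (hw : Continuous w)
    (h : ∀ (n : E) (t : ℝ), ‖n‖ = 1 → 0 < t → ∀ x, inner ℝ n x < t → w (sg n t x) ≤ w x)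
    (x y : E) (hxy : ‖x‖ ≤ ‖y‖) : w y ≤ w x := by
  have key : ∀ x y : E, ‖x‖ < ‖y‖ → w y ≤ w x := by
    intro x y hxy
    have hne : 0 < ‖y - x‖ := by
      rw [norm_pos_iff, sub_ne_zero]; rintro rfl; exact lt_irrefl _ hxy
    set n : E := ‖y - x‖⁻¹ • (y - x) with hn
    have hn1 : ‖n‖ = 1 := by
      rw [hn, norm_smul, norm_inv, norm_norm, inv_mul_cancel₀ hne.ne']
    have i1 : inner ℝ n y - inner ℝ n x = ‖y - x‖ := by
      rw [← inner_sub_right, hn, inner_smul_left, real_inner_self_eq_norm_sq]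
      simp; field_simp
    have i2 : inner ℝ n y + inner ℝ n x = ‖y - x‖⁻¹ * (‖y‖ ^ 2 - ‖x‖ ^ 2) := by
      rw [← inner_add_right, hn, inner_smul_left, inner_sub_left, inner_add_right, inner_add_right,
        real_inner_self_eq_norm_sq, real_inner_self_eq_norm_sq, real_inner_comm x y]
      simp; left; ring
    have ht : 0 < (inner ℝ n y + inner ℝ n x) / 2 := by
      rw [i2]
      have : 0 < ‖y‖ ^ 2 - ‖x‖ ^ 2 := by nlinarith [norm_nonneg x]
      positivity
    have := h n _ hn1 ht x (by linarith)
    have e : sg n ((inner ℝ n y + inner ℝ n x) / 2) x = y := by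
      rw [sg, show 2 * (inner ℝ n x - (inner ℝ n y + inner ℝ n x) / 2) = - ‖y - x‖ by linarith, hn,
        smul_smul, neg_mul, mul_inv_cancel₀ hne.ne']
      simp
    rwa [e] at this
  rcases hxy.lt_or_eq with h1 | h1
  · exact key x y h1
  · by_cases hx0 : x = 0
    · subst hx0
      rw [norm_zero] at h1
      rw [norm_eq_zero.1 h1.symm]
    have hxp : 0 < ‖x‖ := norm_pos_iff.2 hx0
    have ht : Tendsto (fun s : ℝ => w (s • x)) (𝓝[<] 1) (𝓝 (w x)) := by
      have : Continuous fun s : ℝ => w (s • x) := by fun_prop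
      have := this.tendsto 1
      rw [one_smul] at this
      exact this.mono_left nhdsWithin_le_nhds
    refine ge_of_tendsto ht ?_
    filter_upwards [Ioo_mem_nhdsLT (show (0 : ℝ) < 1 by norm_num)] with s hs
    refine key _ _ ?_
    rw [norm_smul, Real.norm_of_nonneg hs.1.le, ← h1]
    nlinarith [hs.2]

lemma ps_exists {K : NNReal} {R M p q : ℝ} (hp : 1 ≤ p) (hq : 0 < q) {v : E → ℝ}
    (hl : LipschitzWith K v) (h0 : ∀ x, 0 ≤ v x) (hM : ∀ x, v x ≤ M) (hz : ∀ x, R ≤ ‖x‖ → v x = 0) :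
    ∃ w, XC K R M p q v w ∧ ∀ x y, ‖x‖ ≤ ‖y‖ → w y ≤ w x := by
  set J : (E → ℝ) → ℝ := fun w => ∫ x, w x * ‖x‖ ^ 2 with hJ
  have hv : XC K R M p q v v := ⟨hl, h0, hM, hz, rfl, fun _ => le_rfl⟩
  have hne : (J '' {w | XC K R M p q v w}).Nonempty := ⟨_, v, hv, rfl⟩
  have hbd : BddBelow (J '' {w | XC K R M p q v w}) := by
    refine ⟨0, ?_⟩
    rintro _ ⟨w, hw, rfl⟩
    exact integral_nonneg fun x => mul_nonneg (hw.nonneg x) (by positivity)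
  obtain ⟨u, -, hu, hmem⟩ := exists_seq_tendsto_sInf hne hbd
  choose f hf hfu using hmem
  obtain ⟨g, φ, hφ, hg⟩ := seqcpt f K M (fun n => (hf n).lip) (fun n x => ⟨(hf n).nonneg x, (hf n).le x⟩)
  have hgX : XC K R M p q v g := XC.limit hp hq (fun n => hf (φ n)) hg
  have hM0 : 0 ≤ M := (h0 0).trans (hM 0)
  have hgJ : J g = sInf (J '' {w | XC K R M p q v w}) := by
    have := dom_conv (R := R) (M := M * R ^ 2) (f := fun n x => f (φ n) x * ‖x‖ ^ 2)
      (g := fun x => g x * ‖x‖ ^ 2) (fun n => by have := (hf (φ n)).lip.continuous; fun_prop)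
      (fun n x => ?_) (fun n x hx => by rw [(hf (φ n)).zero x hx, zero_mul])
      (fun x => (hg x).mul_const _)
    · refine tendsto_nhds_unique this ?_
      have h2 := hu.comp hφ.tendsto_atTop
      refine h2.congr fun n => ?_
      exact (hfu (φ n)).symm
    · have h3 := (hf (φ n)).nonneg x
      rw [abs_of_nonneg (by positivity)]
      by_cases hx : R ≤ ‖x‖
      · rw [(hf (φ n)).zero x hx, zero_mul]; positivity
      · push Not at hx
        have := (hf (φ n)).le x
        have : ‖x‖ ^ 2 ≤ R ^ 2 := by nlinarith [norm_nonneg x]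
        gcongr
  refine ⟨g, hgX, mono_of_pol hgX.lip.continuous fun n t hn ht x hx => ?_⟩
  have hP := hgX.pol hp hq hn ht
  refine pol_moment hn ht hgX.lip.continuous hP.lip.continuous (cs_of_zero hgX.zero)
    (cs_of_zero hP.zero) ?_ x hx
  have : J g ≤ J (pol n t g) := by
    rw [hgJ]; exact csInf_le hbd ⟨_, hP, rfl⟩
  exact this
end

open MeasureTheory Metric Set Real

section
variable {E : Type*} [NormedAddCommGroup E] [InnerProductSpace ℝ E] [FiniteDimensional ℝ E]
  [MeasurableSpace E] [BorelSpace E]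
open Filter Topology Module

/-- cutoff -/
noncomputable def cut (z : E) : ℝ := if ‖z‖ < 1 then 1 else 0

lemma cut_nonneg (z : E) : 0 ≤ cut z := by unfold cut; split_ifs <;> norm_num

lemma cut_meas : Measurable (cut : E → ℝ) :=
  Measurable.ite (isOpen_lt (by fun_prop) (by fun_prop)).measurableSet measurable_const measurable_const

/-- constant -/
noncomputable def kap (p : ℝ) (e : E) : ENNReal :=
  ∫⁻ z : E, ENNReal.ofReal (cut z * |inner ℝ e z| ^ p)

lemma kap_meas (p : ℝ) (e : E) : Measurable fun z : E => ENNReal.ofReal (cut z * |inner ℝ e z| ^ p) := by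
  refine (cut_meas.mul (Measurable.pow_const ?_ _)).ennreal_ofReal
  exact (by fun_prop : Continuous fun z : E => |inner ℝ e z|).measurable

lemma kap_eq {p : ℝ} (hp : 0 < p) {e : E} (he : ‖e‖ = 1) (L : E →L[ℝ] ℝ) :
    ∫⁻ z : E, ENNReal.ofReal (cut z * |L z| ^ p) = ENNReal.ofReal (‖L‖ ^ p) * kap p e := by
  set a : E := (InnerProductSpace.toDual ℝ E).symm L with ha
  have hL : ∀ z, L z = inner ℝ a z := fun z => by simp [ha]
  have hn : ‖a‖ = ‖L‖ := by simp [ha]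
  rw [← hn]
  simp_rw [hL]
  by_cases h0 : a = 0
  · rw [h0]; simp [zero_rpow hp.ne']
  have hpos : 0 < ‖a‖ := norm_pos_iff.2 h0
  set b : E := ‖a‖⁻¹ • a with hb
  have hb1 : ‖b‖ = 1 := by rw [hb, norm_smul, norm_inv, norm_norm, inv_mul_cancel₀ hpos.ne']
  have hab : ‖a‖ • b = a := by rw [hb, smul_smul, mul_inv_cancel₀ hpos.ne', one_smul]
  set g := (ℝ ∙ (b - e))ᗮ.reflection with hg
  have hgb : g b = e := Submodule.reflection_sub (by rw [hb1, he])
  have hi : ∀ z, inner ℝ b z = inner ℝ e (g z) := fun z => by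
    rw [← hgb, LinearIsometryEquiv.inner_map_map]
  have hI : ∀ z, ENNReal.ofReal (cut z * |inner ℝ a z| ^ p) = ENNReal.ofReal (‖a‖ ^ p) *
      ENNReal.ofReal (cut (g z) * |inner ℝ e (g z)| ^ p) := fun z => by
    rw [← ENNReal.ofReal_mul (by positivity)]
    congr 1
    rw [← hi, ← hab, inner_smul_left, abs_mul, mul_rpow (abs_nonneg _) (abs_nonneg _)]
    simp [cut, hab]
  simp_rw [hI]
  rw [lintegral_const_mul]
  · congr 1
    exact g.measurePreserving.lintegral_comp (kap_meas p e)
  · exact (kap_meas p e).comp g.continuous.measurable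

lemma kap_pos {p : ℝ} {e : E} (he : ‖e‖ = 1) : kap p e ≠ 0 := by
  have : 0 < kap p e := by
    unfold kap
    rw [lintegral_pos_iff_support (kap_meas p e)]
    have o1 : IsOpen {z : E | ‖z‖ < 1} := isOpen_lt (by fun_prop) (by fun_prop)
    have o2 : IsOpen {z : E | 0 < inner ℝ e z} := isOpen_lt (by fun_prop) (by fun_prop)
    have ho : IsOpen {z : E | ‖z‖ < 1 ∧ 0 < inner ℝ e z} := o1.inter o2
    have hne : {z : E | ‖z‖ < 1 ∧ 0 < inner ℝ e z}.Nonempty := by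
      refine ⟨(1/2 : ℝ) • e, ?_, ?_⟩
      · rw [norm_smul, he]; norm_num
      · rw [inner_smul_right, real_inner_self_eq_norm_sq, he]; norm_num
    refine (ho.measure_pos volume hne).trans_le (measure_mono ?_)
    rintro z ⟨h1, h2⟩
    simp only [Function.mem_support, ne_eq, ENNReal.ofReal_eq_zero, not_le, cut, h1, if_true, one_mul]
    exact rpow_pos_of_pos (abs_pos.2 h2.ne') _
  exact this.ne'

lemma kap_top {p : ℝ} (hp : 0 ≤ p) {e : E} (he : ‖e‖ = 1) : kap p e ≠ ⊤ := by
  have : ProperSpace E := FiniteDimensional.proper_real E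
  have h1 : kap p e ≤ ∫⁻ z : E, (closedBall (0 : E) 1).indicator (fun _ => 1) z := by
    refine lintegral_mono fun z => ?_
    by_cases hz : ‖z‖ < 1
    · rw [indicator_of_mem (by simpa using hz.le)]
      simp only [cut, hz, if_true, one_mul]
      rw [← ENNReal.ofReal_one]
      refine ENNReal.ofReal_le_ofReal ?_
      have := abs_real_inner_le_norm e z
      rw [he] at this
      exact rpow_le_one (abs_nonneg _) (by linarith) hp
    · simp [cut, hz]
  rw [lintegral_indicator measurableSet_closedBall] at h1
  simp at h1
  exact (h1.trans_lt (isCompact_closedBall (0 : E) 1).measure_lt_top).ne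

lemma lint_scale {h : ℝ} (hh : 0 < h) {F : E → ENNReal} (hF : Measurable F) (x : E) :
    ∫⁻ y, F y = ENNReal.ofReal (h ^ finrank ℝ E) * ∫⁻ z, F (x + h • z) := by
  have h1 : ∫⁻ y, F y = ∫⁻ y, F (x + y) := (lintegral_add_left_eq_self F x).symm
  have h2 : ∫⁻ z, F (x + h • z) = ENNReal.ofReal |(h ^ finrank ℝ E)⁻¹| * ∫⁻ y, F (x + y) := by
    have := Measure.map_addHaar_smul (volume : Measure E) hh.ne'
    rw [← smul_eq_mul, ← lintegral_smul_measure, ← this, lintegral_map]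
    · exact hF.comp (by fun_prop)
    · fun_prop
  rw [h2, h1, ← mul_assoc, ← ENNReal.ofReal_mul (by positivity), abs_of_pos (by positivity),
    mul_inv_cancel₀ (by positivity)]
  simp

/-- rescaled energy -/
noncomputable def Aen (p h : ℝ) (w : E → ℝ) : ENNReal :=
  ∫⁻ z : E × E, ENNReal.ofReal (cut z.2 * |h⁻¹ * (w (z.1 + h • z.2) - w z.1)| ^ p)

lemma Aen_meas (p h : ℝ) {w : E → ℝ} (hw : Continuous w) : Measurable fun z : E × E =>
    ENNReal.ofReal (cut z.2 * |h⁻¹ * (w (z.1 + h • z.2) - w z.1)| ^ p) := by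
  refine ((cut_meas.comp measurable_snd).mul (Measurable.pow_const ?_ _)).ennreal_ofReal
  exact (by fun_prop : Continuous fun z : E × E => |h⁻¹ * (w (z.1 + h • z.2) - w z.1)|).measurable

lemma En_eq (p : ℝ) {h : ℝ} (hh : 0 < h) {w : E → ℝ} (hw : Continuous w) :
    En p h w = ENNReal.ofReal (h ^ finrank ℝ E) * (ENNReal.ofReal (h ^ p) * Aen p h w) := by
  unfold En Aen
  rw [Measure.volume_eq_prod, lintegral_prod _ (enI_meas p h hw).ennreal_ofReal.aemeasurable,
    lintegral_prod _ (Aen_meas p h hw).aemeasurable, ← lintegral_const_mul, ← lintegral_const_mul]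
  · refine lintegral_congr fun x => ?_
    have hsc := lint_scale hh (F := fun y => ENNReal.ofReal (enI p h w (x, y)))
      (((enI_meas p h hw).ennreal_ofReal).comp measurable_prodMk_left) x
    rw [hsc]
    · congr 1
      rw [← lintegral_const_mul]
      · refine lintegral_congr fun z => ?_
        rw [← ENNReal.ofReal_mul (by positivity)]
        congr 1
        unfold enI cut
        have e1 : ‖x - (x + h • z)‖ < h ↔ ‖z‖ < 1 := by
          rw [sub_add_cancel_left, norm_neg, norm_smul, Real.norm_of_nonneg hh.le]
          constructor <;> intro <;> nlinarith
        simp only [e1]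
        rw [abs_mul, mul_rpow (abs_nonneg _) (abs_nonneg _), abs_inv, abs_of_pos hh, inv_rpow hh.le,
          abs_sub_comm]
        have : h ^ p ≠ 0 := (rpow_pos_of_pos hh p).ne'
        field_simp
      · exact (Aen_meas p h hw).comp measurable_prodMk_left
  · exact ((Aen_meas p h hw).lintegral_prod_right' (ν := (volume : Measure E))).const_mul _
  · exact (Aen_meas p h hw).lintegral_prod_right' (ν := (volume : Measure E))

lemma Aen_lim {p : ℝ} (hp : 1 ≤ p) {K : NNReal} {R : ℝ} {w : E → ℝ} (hw : LipschitzWith K w)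
    (hz : ∀ x, R ≤ ‖x‖ → w x = 0) {e : E} (he : ‖e‖ = 1) :
    Tendsto (fun n : ℕ => Aen p (1 / ((n : ℝ) + 1)) w) atTop
      (𝓝 ((∫⁻ x, ENNReal.ofReal (‖fderiv ℝ w x‖ ^ p)) * kap p e)) := by
  have : ProperSpace E := FiniteDimensional.proper_real E
  have hlim : (∫⁻ x, ENNReal.ofReal (‖fderiv ℝ w x‖ ^ p)) * kap p e =
      ∫⁻ z : E × E, ENNReal.ofReal (cut z.2 * |fderiv ℝ w z.1 z.2| ^ p) := by
    rw [Measure.volume_eq_prod, lintegral_prod]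
    · rw [← lintegral_mul_const]
      · exact lintegral_congr fun x => (kap_eq (by linarith) he _).symm
      · exact ((measurable_fderiv ℝ w).norm.pow_const _).ennreal_ofReal
    · refine Measurable.aemeasurable ?_
      refine ((cut_meas.comp measurable_snd).mul (Measurable.pow_const ?_ _)).ennreal_ofReal
      refine Measurable.abs ?_
      exact (isBoundedBilinearMap_apply (𝕜 := ℝ) (E := E) (F := ℝ)).continuous.measurable.comp
        (((measurable_fderiv ℝ w).comp measurable_fst).prodMk measurable_snd)
  rw [hlim]
  refine tendsto_lintegral_of_dominated_convergence
    (fun z => (closedBall (0 : E) (R + 1) ×ˢ closedBall (0 : E) 1).indicator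
      (fun _ => ENNReal.ofReal ((K : ℝ) ^ p)) z) (fun n => Aen_meas p _ hw.continuous) ?_ ?_ ?_
  · intro n
    refine Eventually.of_forall fun z => ?_
    set h : ℝ := 1 / ((n : ℝ) + 1) with hh
    have h0 : 0 < h := by positivity
    have h1 : h ≤ 1 := by rw [hh, div_le_one (by positivity)]; linarith [n.cast_nonneg (α := ℝ)]
    by_cases hz2 : ‖z.2‖ < 1
    · by_cases hz1 : ‖z.1‖ ≤ R + 1
      · have hm : z ∈ closedBall (0 : E) (R + 1) ×ˢ closedBall (0 : E) 1 :=
          ⟨by simpa using hz1, by simpa using hz2.le⟩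
        beta_reduce
        rw [indicator_of_mem hm]
        refine ENNReal.ofReal_le_ofReal ?_
        simp only [cut, hz2, if_true, one_mul]
        refine rpow_le_rpow (abs_nonneg _) ?_ (by linarith)
        have := hw.dist_le_mul (z.1 + h • z.2) z.1
        rw [Real.dist_eq, dist_eq_norm, add_sub_cancel_left, norm_smul, Real.norm_of_nonneg h0.le] at this
        rw [abs_mul, abs_inv, abs_of_pos h0, inv_mul_le_iff₀ h0]
        have hK := K.2
        have : (K : ℝ) * (h * ‖z.2‖) ≤ h * K := by
          have := mul_nonneg hK h0.le
          change 0 ≤ (K : ℝ) * h at this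
          nlinarith
        linarith
      · push Not at hz1
        beta_reduce
        rw [hz z.1 (by linarith), hz (z.1 + h • z.2)]
        · simp [zero_rpow (by linarith : p ≠ 0)]
        · have : ‖h • z.2‖ ≤ 1 := by
            rw [norm_smul, Real.norm_of_nonneg h0.le]; nlinarith [norm_nonneg z.2]
          have := norm_sub_le (z.1 + h • z.2) (h • z.2)
          rw [add_sub_cancel_right] at this
          linarith
    · simp [cut, hz2]
  · rw [lintegral_indicator (measurableSet_closedBall.prod measurableSet_closedBall)]
    rw [lintegral_const]
    refine ENNReal.mul_ne_top ENNReal.ofReal_ne_top ?_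
    rw [Measure.restrict_apply_univ]
    exact ((isCompact_closedBall (0 : E) (R+1)).prod (isCompact_closedBall (0 : E) 1)).measure_lt_top.ne
  · have h1 := hw.ae_differentiableAt (μ := (volume : Measure E))
    have h2 : ∀ᵐ z : E × E, DifferentiableAt ℝ w z.1 := by
      rw [Measure.volume_eq_prod]
      exact Measure.quasiMeasurePreserving_fst.ae h1
    filter_upwards [h2] with z hz
    refine (ENNReal.continuous_ofReal.tendsto _).comp ?_
    refine Tendsto.const_mul _ ?_
    refine Tendsto.rpow_const ?_ (Or.inr (by linarith))
    refine Tendsto.abs ?_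
    have h3 := (hz.hasFDerivAt.hasLineDerivAt z.2).tendsto_slope_zero
    have h4 : Tendsto (fun n : ℕ => 1 / ((n : ℝ) + 1)) atTop (𝓝[≠] 0) := by
      refine tendsto_nhdsWithin_iff.2 ⟨tendsto_one_div_add_atTop_nhds_zero_nat, ?_⟩
      refine Eventually.of_forall fun n => ?_
      have : 0 < 1 / ((n : ℝ) + 1) := by positivity
      exact this.ne'
    have h5 := h3.comp h4
    simpa [Function.comp_def] using h5

lemma ps_grad {p : ℝ} (hp : 1 ≤ p) {K K' : NNReal} {R : ℝ} {v w : E → ℝ} (hw : LipschitzWith K w)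
    (hv : LipschitzWith K' v) (hz : ∀ x, R ≤ ‖x‖ → w x = 0) (hz' : ∀ x, R ≤ ‖x‖ → v x = 0)
    {e : E} (he : ‖e‖ = 1) (hE : ∀ h, En p h w ≤ En p h v) :
    ∫⁻ x, ENNReal.ofReal (‖fderiv ℝ w x‖ ^ p) ≤ ∫⁻ x, ENNReal.ofReal (‖fderiv ℝ v x‖ ^ p) := by
  have := le_of_tendsto_of_tendsto' (Aen_lim hp hw hz he) (Aen_lim hp hv hz' he) fun n => by
    have h0 : 0 < 1 / ((n : ℝ) + 1) := by positivity
    have := hE (1 / ((n : ℝ) + 1))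
    rw [En_eq p h0 hw.continuous, En_eq p h0 hv.continuous] at this
    rw [ENNReal.mul_le_mul_iff_right, ENNReal.mul_le_mul_iff_right] at this
    · exact this
    · simpa using rpow_pos_of_pos h0 p
    · simp
    · simpa using pow_pos h0 _
    · simp
  rwa [ENNReal.mul_le_mul_iff_left (kap_pos he) (kap_top (by linarith) he)] at this
end

open MeasureTheory Metric Set Real

section
variable {E : Type*} [NormedAddCommGroup E] [InnerProductSpace ℝ E] [FiniteDimensional ℝ E]
  [MeasurableSpace E] [BorelSpace E]
open Filter Topology Module

lemma fderiv_out {R : ℝ} {w : E → ℝ} (hz : ∀ x, R ≤ ‖x‖ → w x = 0) {x : E} (hx : R < ‖x‖) :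
    fderiv ℝ w x = 0 := by
  have : w =ᶠ[𝓝 x] fun _ => 0 := by
    have ho : IsOpen {y : E | R < ‖y‖} := isOpen_lt (by fun_prop) (by fun_prop)
    filter_upwards [ho.mem_nhds hx] with y hy using hz y (le_of_lt hy)
  rw [this.fderiv_eq]; simp

lemma ind_int (R M : ℝ) : Integrable (fun x : E => (closedBall (0 : E) R).indicator (fun _ => M) x) := by
  have : ProperSpace E := FiniteDimensional.proper_real E
  rw [integrable_indicator_iff measurableSet_closedBall]
  refine integrableOn_const ?_
  exact (isCompact_closedBall (0 : E) R).measure_lt_top.ne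

lemma grad_le {p R : ℝ} (hp : 0 < p) {K : NNReal} {w : E → ℝ} (hw : LipschitzWith K w)
    (hz : ∀ x, R ≤ ‖x‖ → w x = 0) (x : E) :
    ‖‖fderiv ℝ w x‖ ^ p‖ ≤ (closedBall (0 : E) R).indicator (fun _ => (K : ℝ) ^ p) x := by
  by_cases hx : x ∈ closedBall (0 : E) R
  · rw [indicator_of_mem hx, Real.norm_of_nonneg (by positivity)]
    exact rpow_le_rpow (norm_nonneg _) (norm_fderiv_le_of_lipschitz ℝ hw) hp.le
  · rw [indicator_of_notMem hx, fderiv_out hz (by simpa using hx)]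
    simp [zero_rpow hp.ne']

lemma grad_int {p R : ℝ} (hp : 0 < p) {K : NNReal} {w : E → ℝ} (hw : LipschitzWith K w)
    (hz : ∀ x, R ≤ ‖x‖ → w x = 0) : Integrable fun x => ‖fderiv ℝ w x‖ ^ p := by
  refine (ind_int R ((K : ℝ) ^ p)).mono' ?_ (Eventually.of_forall (grad_le hp hw hz))
  exact ((measurable_fderiv ℝ w).norm.pow_const _).aestronglyMeasurable

open scoped Convolution

lemma conv_lip (φ : ContDiffBump (0 : E)) {K : NNReal} {g : E → ℝ} (hg : LipschitzWith K g) :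
    LipschitzWith K (φ.normed volume ⋆[ContinuousLinearMap.lsmul ℝ ℝ, volume] g) := by
  have hI : ∀ x, Integrable fun t => φ.normed volume t • g (x - t) := fun x => by
    refine Continuous.integrable_of_hasCompactSupport ?_ ?_
    · have := φ.continuous_normed (μ := volume)
      have := hg.continuous
      fun_prop
    · exact φ.hasCompactSupport_normed.smul_right
  refine LipschitzWith.of_dist_le_mul fun x y => ?_
  rw [Real.dist_eq, convolution, convolution]
  simp only [ContinuousLinearMap.lsmul_apply]
  rw [← integral_sub (hI x) (hI y)]
  have hb : Integrable fun t => φ.normed volume t * (K * dist x y) :=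
    (φ.integrable_normed (μ := volume)).mul_const _
  calc _ ≤ ∫ t, φ.normed volume t * (K * dist x y) := by
        rw [← Real.norm_eq_abs]
        refine norm_integral_le_of_norm_le hb (Eventually.of_forall fun t => ?_)
        rw [← smul_sub, norm_smul, Real.norm_of_nonneg (φ.nonneg_normed _)]
        refine mul_le_mul_of_nonneg_left ?_ (φ.nonneg_normed _)
        have := hg.dist_le_mul (x - t) (y - t)
        rwa [dist_sub_right, dist_eq_norm] at this
    _ = _ := by rw [integral_mul_const, φ.integral_normed, one_mul]

lemma conv_fderiv (φ : ContDiffBump (0 : E)) {K : NNReal} {g : E → ℝ} (hg : LipschitzWith K g) (x : E) :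
    fderiv ℝ (φ.normed volume ⋆[ContinuousLinearMap.lsmul ℝ ℝ, volume] g) x =
      (φ.normed volume ⋆[ContinuousLinearMap.lsmul ℝ ℝ, volume] (fderiv ℝ g)) x := by
  have hφc := φ.continuous_normed (μ := volume)
  have hgc := hg.continuous
  have := hasFDerivAt_integral_of_dominated_loc_of_lip (𝕜 := ℝ) (μ := (volume : Measure E))
    (F := fun x t => φ.normed volume t • g (x - t))
    (F' := fun t => φ.normed volume t • fderiv ℝ g (x - t)) (x₀ := x) (s := univ)
    (bound := fun t => φ.normed volume t * K) univ_mem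
    (Eventually.of_forall fun y => (by fun_prop : Continuous fun t => φ.normed volume t • g (y - t)).aestronglyMeasurable)
    (Continuous.integrable_of_hasCompactSupport (by fun_prop) φ.hasCompactSupport_normed.smul_right)
    ?_ ?_ ((φ.integrable_normed (μ := volume)).mul_const _) ?_
  · exact this.2.fderiv
  · refine Measurable.aestronglyMeasurable ?_
    exact hφc.measurable.smul ((measurable_fderiv ℝ g).comp (by fun_prop))
  · refine Eventually.of_forall fun t => ?_
    refine LipschitzOnWith.of_dist_le_mul fun y _ z _ => ?_
    have := hg.dist_le_mul (y - t) (z - t)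
    rw [dist_sub_right] at this
    have hab : |φ.normed volume t * (K : ℝ)| = φ.normed volume t * K :=
      abs_of_nonneg (mul_nonneg (φ.nonneg_normed _) K.coe_nonneg)
    rw [dist_smul₀, Real.norm_of_nonneg (φ.nonneg_normed _), coe_nnabs, hab, mul_assoc]
    exact mul_le_mul_of_nonneg_left this (φ.nonneg_normed _)
  · have h1 := hg.ae_differentiableAt (μ := (volume : Measure E))
    have h2 := (Measure.measurePreserving_sub_left (volume : Measure E) x).quasiMeasurePreserving.ae h1
    filter_upwards [h2] with t ht
    have h3 : HasFDerivAt (fun y => g (y - t)) (fderiv ℝ g (x - t)) x := by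
      have := ht.hasFDerivAt.comp x ((hasFDerivAt_id x).sub_const t)
      simpa [Function.comp_def] using this
    exact h3.fun_const_smul _

lemma conv_zero (φ : ContDiffBump (0 : E)) {r : ℝ} {g : E → ℝ} (hz : ∀ x, r ≤ ‖x‖ → g x = 0)
    (x : E) (hx : r + φ.rOut ≤ ‖x‖) :
    (φ.normed volume ⋆[ContinuousLinearMap.lsmul ℝ ℝ, volume] g) x = 0 := by
  rw [convolution]
  refine integral_eq_zero_of_ae (Eventually.of_forall fun t => ?_)
  simp only [ContinuousLinearMap.lsmul_apply, Pi.zero_apply]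
  by_cases ht : t ∈ Function.support (φ.normed volume)
  · rw [φ.support_normed_eq] at ht
    simp at ht
    rw [hz, smul_zero]
    have := norm_sub_norm_le x t
    linarith
  · rw [Function.notMem_support.1 ht, zero_smul]

/-- approximation of Lipschitz functions by smooth functions -/
lemma mollify {p q r R : ℝ} (hp : 0 < p) (hq : 0 < q) (hrR : r < R) {K : NNReal} {g : E → ℝ}
    (hg : LipschitzWith K g) (hz : ∀ x, r ≤ ‖x‖ → g x = 0) :
    ∃ v : ℕ → E → ℝ, (∀ n, ContDiff ℝ (⊤ : ℕ∞) (v n) ∧ tsupport (v n) ⊆ ball 0 R) ∧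
      Tendsto (fun n => ∫ x, |v n x| ^ q) atTop (𝓝 (∫ x, |g x| ^ q)) ∧
      Tendsto (fun n => ∫ x, ‖fderiv ℝ (v n) x‖ ^ p) atTop (𝓝 (∫ x, ‖fderiv ℝ g x‖ ^ p)) := by
  have : ProperSpace E := FiniteDimensional.proper_real E
  have hd : 0 < R - r := by linarith
  let φ : ℕ → ContDiffBump (0 : E) := fun n =>
    ⟨(R - r) / 4 / ((n : ℝ) + 1), (R - r) / 2 / ((n : ℝ) + 1), by positivity, by gcongr; linarith⟩
  have hout : ∀ n, (φ n).rOut ≤ (R - r) / 2 := fun n => by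
    change (R - r) / 2 / ((n : ℝ) + 1) ≤ _
    refine div_le_self (by positivity) ?_
    linarith [n.cast_nonneg (α := ℝ)]
  have hφ : Tendsto (fun n => (φ n).rOut) atTop (𝓝 0) := by
    change Tendsto (fun n : ℕ => (R - r) / 2 / ((n : ℝ) + 1)) atTop (𝓝 0)
    have := (tendsto_one_div_add_atTop_nhds_zero_nat (𝕜 := ℝ)).const_mul ((R - r) / 2)
    simpa [div_eq_mul_inv] using this
  let v : ℕ → E → ℝ := fun n => ((φ n).normed volume ⋆[ContinuousLinearMap.lsmul ℝ ℝ, volume] g)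
  have hvl : ∀ n, LipschitzWith K (v n) := fun n => conv_lip (φ n) hg
  have hvz' : ∀ n x, (r + R) / 2 ≤ ‖x‖ → v n x = 0 := fun n x hx =>
    conv_zero (φ n) hz x (by linarith [hout n])
  have hvz : ∀ n x, R ≤ ‖x‖ → v n x = 0 := fun n x hx => hvz' n x (by linarith)
  obtain ⟨M, hM⟩ := (cs_of_zero hz).exists_bound_of_continuous hg.continuous
  refine ⟨v, fun n => ⟨?_, ?_⟩, ?_, ?_⟩
  · exact (φ n).hasCompactSupport_normed.contDiff_convolution_left _ (φ n).contDiff_normed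
      hg.continuous.locallyIntegrable
  · refine (closure_minimal (t := closedBall 0 ((r + R) / 2)) ?_ isClosed_closedBall).trans ?_
    · intro x hx
      by_contra h
      simp at h
      exact hx (hvz' n x h.le)
    · intro x hx
      simp at hx ⊢
      linarith
  · refine dom_conv (R := R) (M := (M + K * ((R - r) / 2)) ^ q) (f := fun n x => |v n x| ^ q)
      (fun n => (hvl n).continuous.abs.rpow_const fun x => Or.inr hq.le) (fun n x => ?_)
      (fun n x hx => by simp only [hvz n x hx, abs_zero, zero_rpow hq.ne'])
      (fun x => ?_)
    · rw [abs_of_nonneg (by positivity)]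
      refine rpow_le_rpow (abs_nonneg _) ?_ hq.le
      have := (φ n).dist_normed_convolution_le (μ := volume) (g := g) (x₀ := x) (ε := K * ((R - r) / 2))
        hg.continuous.aestronglyMeasurable (fun y hy => (hg.dist_le_mul y x).trans
          (mul_le_mul_of_nonneg_left ((mem_ball.1 hy).le.trans (hout n)) K.2))
      rw [Real.dist_eq] at this
      have h2 := hM x
      rw [Real.norm_eq_abs] at h2
      have h3 := abs_sub_abs_le_abs_sub (v n x) (g x)
      have h4 : |v n x - g x| ≤ K * ((R - r) / 2) := this
      linarith
    · exact ((ContDiffBump.convolution_tendsto_right_of_continuous hφ hg.continuous x).abs).rpow_const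
        (Or.inr hq.le)
  · refine tendsto_integral_of_dominated_convergence
      (fun x => (closedBall (0 : E) R).indicator (fun _ => (K : ℝ) ^ p) x)
      (fun n => ((measurable_fderiv ℝ (v n)).norm.pow_const _).aestronglyMeasurable) (ind_int R _)
      (fun n => Eventually.of_forall (grad_le hp (hvl n) (hvz n))) ?_
    have hli : LocallyIntegrable (fderiv ℝ g) (volume : Measure E) := by
      have : Integrable fun x => ‖fderiv ℝ g x‖ := by
        have := grad_int one_pos hg hz
        simpa using this
      have h2 : Integrable (fderiv ℝ g) (volume : Measure E) :=
        (integrable_norm_iff (measurable_fderiv ℝ g).aestronglyMeasurable).1 this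
      exact h2.locallyIntegrable
    have hae := ContDiffBump.ae_convolution_tendsto_right_of_locallyIntegrable (K := 2) hφ
      (Eventually.of_forall fun n => by
        change (R - r) / 2 / ((n : ℝ) + 1) ≤ 2 * ((R - r) / 4 / ((n : ℝ) + 1))
        apply le_of_eq; ring) hli
    filter_upwards [hae] with x hx
    refine Tendsto.rpow_const ?_ (Or.inr hp.le)
    refine Tendsto.norm ?_
    refine hx.congr fun n => ?_
    exact (conv_fderiv (φ n) hg x).symm
end

open MeasureTheory Metric Set Real

section
variable {N : ℕ}
open Filter Topology Module

lemma lam_bdd (p q : ℝ) (Ω : Set (EuclideanSpace ℝ (Fin N))) :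
    BddBelow { R : ℝ | ∃ v : EuclideanSpace ℝ (Fin N) → ℝ,
    ContDiff ℝ (⊤ : ℕ∞) v ∧ HasCompactSupport v ∧ tsupport v ⊆ Ω ∧
    (∃ x ∈ Ω, v x ≠ 0) ∧ R = rayleighQuot p q Ω v } := by
  refine ⟨0, ?_⟩
  rintro _ ⟨v, -, -, -, -, rfl⟩
  unfold rayleighQuot
  refine div_nonneg (integral_nonneg fun x => by positivity) (rpow_nonneg (integral_nonneg fun x => by positivity) _)

lemma lam_smooth {p q R : ℝ} (hp : 0 < p) (hq : 0 < q) {v : EuclideanSpace ℝ (Fin N) → ℝ}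
    (hv : ContDiff ℝ (⊤ : ℕ∞) v) (hs : tsupport v ⊆ ball 0 R) :
    lambdaPQ p q (ball (0 : EuclideanSpace ℝ (Fin N)) R) * (∫ x, |v x| ^ q) ^ (p / q) ≤
      ∫ x, ‖fderiv ℝ v x‖ ^ p := by
  have hA : 0 ≤ ∫ x, ‖fderiv ℝ v x‖ ^ p := integral_nonneg fun x => by positivity
  have hB : 0 ≤ ∫ x, |v x| ^ q := integral_nonneg fun x => by positivity
  have hB' := rpow_nonneg hB (p / q)
  rcases hB'.eq_or_lt with h0 | h0
  · rw [← h0, mul_zero]; exact hA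
  rw [← le_div_iff₀ h0]
  refine csInf_le (lam_bdd p q _) ⟨v, hv, ?_, hs, ?_, ?_⟩
  · exact isCompact_of_isClosed_isBounded (isClosed_tsupport v) (isBounded_ball.subset hs)
  · by_contra h
    push Not at h
    have : ∀ x, v x = 0 := fun x => by
      by_cases hx : x ∈ ball (0 : EuclideanSpace ℝ (Fin N)) R
      · exact h x hx
      · exact image_eq_zero_of_notMem_tsupport fun h => hx (hs h)
    simp [this, zero_rpow hq.ne', zero_rpow (div_pos hp hq).ne'] at h0
  · unfold rayleighQuot
    rw [setIntegral_eq_integral_of_forall_compl_eq_zero, setIntegral_eq_integral_of_forall_compl_eq_zero]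
    · intro x hx
      rw [image_eq_zero_of_notMem_tsupport fun h => hx (hs h)]
      simp [zero_rpow hq.ne']
    · intro x hx
      rw [fderiv_of_notMem_tsupport ℝ fun h => hx (hs h)]
      simp [zero_rpow hp.ne']

lemma lam_le' {p q r R : ℝ} (hp : 0 < p) (hq : 0 < q) (hrR : r < R) {K : NNReal}
    {g : EuclideanSpace ℝ (Fin N) → ℝ}
    (hg : LipschitzWith K g) (hz : ∀ x, r ≤ ‖x‖ → g x = 0) :
    lambdaPQ p q (ball (0 : EuclideanSpace ℝ (Fin N)) R) * (∫ x, |g x| ^ q) ^ (p / q) ≤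
      ∫ x, ‖fderiv ℝ g x‖ ^ p := by
  obtain ⟨v, h1, h2, h3⟩ := mollify hp hq hrR hg hz
  refine le_of_tendsto_of_tendsto' ((h2.rpow_const (Or.inr (div_pos hp hq).le)).const_mul _) h3 fun n => ?_
  exact lam_smooth hp hq (h1 n).1 (h1 n).2

lemma lip_bdry {R : ℝ} {K : NNReal} {w : EuclideanSpace ℝ (Fin N) → ℝ}
    (hw : LipschitzWith K w) (hz : ∀ x, R ≤ ‖x‖ → w x = 0) (x : EuclideanSpace ℝ (Fin N))
    (hx : 0 < ‖x‖) (hxR : ‖x‖ ≤ R) : w x ≤ K * (R - ‖x‖) := by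
  have h := hw.dist_le_mul x ((R / ‖x‖) • x)
  rw [hz ((R / ‖x‖) • x) (by rw [norm_smul, norm_div, norm_norm, div_mul_cancel₀ _ hx.ne']; exact le_abs_self R),
    Real.dist_eq, sub_zero, dist_eq_norm] at h
  have h2 : x - (R / ‖x‖) • x = (1 - R / ‖x‖) • x := by rw [sub_smul, one_smul]
  have h3 : ‖x - (R / ‖x‖) • x‖ = R - ‖x‖ := by
    rw [h2, norm_smul, Real.norm_eq_abs, abs_of_nonpos, neg_sub, sub_mul, div_mul_cancel₀ _ hx.ne', one_mul]
    rw [sub_nonpos, one_le_div hx]; exact hxR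
  rw [h3] at h
  exact (le_abs_self _).trans h

/-- the variational inequality for Lipschitz functions vanishing outside the ball -/
lemma lam_le {p q R : ℝ} (hp : 0 < p) (hq : 0 < q) (hR : 0 < R) {K : NNReal}
    {w : EuclideanSpace ℝ (Fin N) → ℝ}
    (hw : LipschitzWith K w) (h0 : ∀ x, 0 ≤ w x) (hz : ∀ x, R ≤ ‖x‖ → w x = 0) :
    lambdaPQ p q (ball (0 : EuclideanSpace ℝ (Fin N)) R) * (∫ x, w x ^ q) ^ (p / q) ≤
      ∫ x, ‖fderiv ℝ w x‖ ^ p := by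
  let g : ℕ → EuclideanSpace ℝ (Fin N) → ℝ := fun n x => max (w x - 1 / ((n : ℝ) + 1)) 0
  have hgn : ∀ n x, 0 ≤ g n x := fun n x => le_max_right _ _
  have hδ : ∀ n : ℕ, 0 < 1 / ((n : ℝ) + 1) := fun n => by positivity
  have hgl : ∀ n x, g n x ≤ w x := fun n x => max_le (by linarith [hδ n]) (h0 x)
  have hdom : ∀ n x y, |g n y - g n x| ≤ |w y - w x| := fun n x y => by
    refine (abs_max_sub_max_le_abs _ _ _).trans (le_of_eq ?_)
    congr 1; ring
  have hglip : ∀ n, LipschitzWith K (g n) := fun n => LipschitzWith.of_dist_le_mul fun x y => by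
    have := hw.dist_le_mul x y
    rw [Real.dist_eq] at this ⊢
    exact (hdom n y x).trans this
  have hw0 : ∀ᵐ x : EuclideanSpace ℝ (Fin N), DifferentiableAt ℝ w x := hw.ae_differentiableAt
  have hen : ∀ n, ∫ x, ‖fderiv ℝ (g n) x‖ ^ p ≤ ∫ x, ‖fderiv ℝ w x‖ ^ p := fun n => by
    refine integral_mono_ae (grad_int hp (hglip n) (R := R) ?_) (grad_int hp hw hz) ?_
    · intro x hx
      exact le_antisymm ((hgl n x).trans (hz x hx).le) (hgn n x)
    · filter_upwards [hw0] with x hx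
      exact rpow_le_rpow (norm_nonneg _) (fderiv_dom (fun y => hdom n x y) hx) hp.le
  have hgz : ∀ n x, R ≤ ‖x‖ → g n x = 0 := fun n x hx =>
    le_antisymm ((hgl n x).trans (hz x hx).le) (hgn n x)
  have key : ∀ n, lambdaPQ p q (ball (0 : EuclideanSpace ℝ (Fin N)) R) * (∫ x, g n x ^ q) ^ (p / q) ≤
      ∫ x, ‖fderiv ℝ w x‖ ^ p := fun n => by
    have hr : max (R - 1 / ((n : ℝ) + 1) / (K + 1)) (R / 2) < R := by
      refine max_lt ?_ (by linarith)
      have := K.2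
      have : 0 < 1 / ((n : ℝ) + 1) / (K + 1) := by positivity
      linarith
    have h := lam_le' (p := p) (q := q) hp hq hr (hglip n) ?_
    · refine le_trans (le_of_eq ?_) (h.trans (hen n))
      simp_rw [abs_of_nonneg (hgn n _)]
    · intro x hx
      rcases le_total R ‖x‖ with hxR | hxR
      · exact hgz n x hxR
      have hx1 := (le_max_left _ _).trans hx
      have hx2 := (le_max_right _ _).trans hx
      have hb := lip_bdry hw hz x (by linarith) hxR
      refine max_eq_right ?_
      have hK : (0 : ℝ) < K + 1 := by have := K.2; positivity
      have : R - ‖x‖ ≤ 1 / ((n : ℝ) + 1) / (K + 1) := by linarith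
      rw [le_div_iff₀ hK] at this
      nlinarith
  obtain ⟨M, hM⟩ := (cs_of_zero hz).exists_bound_of_continuous hw.continuous
  have hlim : Tendsto (fun n => ∫ x, g n x ^ q) atTop (𝓝 (∫ x, w x ^ q)) := by
    refine dom_conv (R := R) (M := M ^ q) (f := fun n x => g n x ^ q)
      (fun n => (hglip n).continuous.rpow_const fun x => Or.inr hq.le) (fun n x => ?_)
      (fun n x hx => by simp only [hgz n x hx, zero_rpow hq.ne'])
      (fun x => ?_)
    · rw [abs_of_nonneg (rpow_nonneg (hgn n x) _)]
      exact rpow_le_rpow (hgn n x) ((hgl n x).trans ((le_abs_self _).trans (hM x))) hq.le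
    · refine Tendsto.rpow_const ?_ (Or.inr hq.le)
      have h1 := (tendsto_one_div_add_atTop_nhds_zero_nat (𝕜 := ℝ)).const_sub (w x)
      have h2 := h1.max (tendsto_const_nhds (x := (0:ℝ)))
      rwa [sub_zero, max_eq_left (h0 x)] at h2
  exact le_of_tendsto' ((hlim.rpow_const (Or.inr (div_pos hp hq).le)).const_mul _) key
end

open MeasureTheory Metric Set Real

section
variable {N : ℕ}
open Filter Topology Module

lemma lam_nonempty (p q : ℝ) (c : EuclideanSpace ℝ (Fin N)) {r : ℝ} (hr : 0 < r) :
    { R : ℝ | ∃ v : EuclideanSpace ℝ (Fin N) → ℝ,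
    ContDiff ℝ (⊤ : ℕ∞) v ∧ HasCompactSupport v ∧ tsupport v ⊆ ball c r ∧
    (∃ x ∈ ball c r, v x ≠ 0) ∧ R = rayleighQuot p q (ball c r) v }.Nonempty := by
  let φ : ContDiffBump c := ⟨r / 4, r / 2, by positivity, by linarith⟩
  refine ⟨_, φ, φ.contDiff, φ.hasCompactSupport, ?_, ⟨c, mem_ball_self hr, ?_⟩, rfl⟩
  · rw [φ.tsupport_eq]
    exact closedBall_subset_ball (by change r / 2 < r; linarith)
  · rw [φ.one_of_mem_closedBall (mem_closedBall_self φ.rIn_pos.le)]; norm_num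

lemma exp_choice (hN : 2 ≤ N) {p q : ℝ} (hp : 1 < p) (hpq : p < q) (hq : ltCritical N p q) :
    ∃ p1 : ℝ, 1 ≤ p1 ∧ p1 < N ∧ p1 ≤ p ∧ p1⁻¹ - (N : ℝ)⁻¹ ≤ q⁻¹ := by
  have hN' : (2 : ℝ) ≤ N := by exact_mod_cast hN
  rcases lt_or_ge p N with h | h
  · refine ⟨p, hp.le, h, le_rfl, ?_⟩
    have h1 := hq h
    have h2 : (N : ℝ) * p / (N - p) = (p⁻¹ - (N : ℝ)⁻¹)⁻¹ := by
      have : (N : ℝ) - p ≠ 0 := by linarith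
      have h3 : p⁻¹ - (N : ℝ)⁻¹ = (N - p) / (N * p) := by field_simp
      rw [h3, inv_div]
    rw [h2] at h1
    have h3 : 0 < (p⁻¹ - (N : ℝ)⁻¹)⁻¹ := by linarith
    have := inv_anti₀ (by linarith) h1.le
    rwa [inv_inv] at this
  · have hd : (0 : ℝ) < N + q := by linarith
    refine ⟨N * q / (N + q), ?_, ?_, ?_, ?_⟩
    · rw [le_div_iff₀ hd]; nlinarith
    · rw [div_lt_iff₀ hd]; nlinarith
    · refine le_trans ?_ h
      rw [div_le_iff₀ hd]; nlinarith
    · have : q ≠ 0 := by linarith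
      have : (N : ℝ) ≠ 0 := by linarith
      apply le_of_eq
      field_simp
      ring

lemma sob (hN : 2 ≤ N) {p q : ℝ} (hp : 1 < p) (hpq : p < q) (hq : ltCritical N p q) (R : ℝ) :
    ∃ C : ℝ, 0 < C ∧ ∀ v : EuclideanSpace ℝ (Fin N) → ℝ, ContDiff ℝ (⊤ : ℕ∞) v → HasCompactSupport v →
      tsupport v ⊆ ball 0 R → (∫ x, |v x| ^ q) ^ (p / q) ≤ C * ∫ x, ‖fderiv ℝ v x‖ ^ p := by
  obtain ⟨p1, h1, h2, h3, h4⟩ := exp_choice hN hp hpq hq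
  have hp0 : 0 < p := by linarith
  have hq0 : 0 < q := by linarith
  set B := ball (0 : EuclideanSpace ℝ (Fin N)) R
  let P : NNReal := ⟨p, hp0.le⟩
  let Q : NNReal := ⟨q, hq0.le⟩
  let P1 : NNReal := ⟨p1, by linarith⟩
  have hfr : finrank ℝ (EuclideanSpace ℝ (Fin N)) = N := by simp
  let C1 : ENNReal := (eLpNormLESNormFDerivOfLeConst ℝ (volume : Measure (EuclideanSpace ℝ (Fin N))) B P1 Q : NNReal)
  let C2 : ENNReal := (volume B) ^ (1 / p1 - 1 / p)
  have hC2 : C2 ≠ ⊤ := by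
    refine ENNReal.rpow_ne_top_of_nonneg ?_ measure_ball_lt_top.ne
    rw [sub_nonneg]
    exact one_div_le_one_div_of_le (by linarith) h3
  have hC : C1 * C2 ≠ ⊤ := ENNReal.mul_ne_top ENNReal.coe_ne_top hC2
  refine ⟨((C1 * C2).toReal + 1) ^ p, by positivity, fun v hv hc hs => ?_⟩
  have hdc : Continuous (fderiv ℝ v) := hv.continuous_fderiv (by simp)
  have e1 : eLpNorm v Q volume ≤ C1 * eLpNorm (fderiv ℝ v) P1 volume := by
    refine eLpNorm_le_eLpNorm_fderiv_of_le volume (hv.of_le (by exact_mod_cast le_top)) ((subset_tsupport v).trans hs)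
      (by exact_mod_cast h1) ?_ ?_ isBounded_ball
    · rw [hfr]; rw [← NNReal.coe_lt_coe]; change p1 < ((N : NNReal) : ℝ); rw [NNReal.coe_natCast]; exact h2
    · rw [hfr]; exact h4
  have e2 : eLpNorm (fderiv ℝ v) P1 volume ≤ eLpNorm (fderiv ℝ v) P volume * C2 := by
    have hsup : Function.support (fderiv ℝ v) ⊆ B := (support_fderiv_subset ℝ).trans hs
    have r1 : eLpNorm (fderiv ℝ v) P1 (volume.restrict B) = eLpNorm (fderiv ℝ v) P1 volume :=
      eLpNorm_restrict_eq_of_support_subset (f := fderiv ℝ v) hsup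
    have r2 : eLpNorm (fderiv ℝ v) P (volume.restrict B) = eLpNorm (fderiv ℝ v) P volume :=
      eLpNorm_restrict_eq_of_support_subset (f := fderiv ℝ v) hsup
    rw [← r1, ← r2]
    have := eLpNorm_le_eLpNorm_mul_rpow_measure_univ (μ := volume.restrict B) (p := P1) (q := P)
      (by exact_mod_cast h3) (f := fderiv ℝ v) hdc.aestronglyMeasurable
    rw [Measure.restrict_apply_univ] at this
    exact this
  have m1 : MemLp v Q volume := hv.continuous.memLp_of_hasCompactSupport hc
  have m2 : MemLp (fderiv ℝ v) P volume := hdc.memLp_of_hasCompactSupport (hc.fderiv ℝ)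
  have hP0 : (P : ENNReal) ≠ 0 := by
    rw [ne_eq, ENNReal.coe_eq_zero, ← NNReal.coe_eq_zero]; exact hp0.ne'
  have hQ0 : (Q : ENNReal) ≠ 0 := by
    rw [ne_eq, ENNReal.coe_eq_zero, ← NNReal.coe_eq_zero]; exact hq0.ne'
  have f1 := m1.eLpNorm_eq_integral_rpow_norm hQ0 ENNReal.coe_ne_top
  have f2 := m2.eLpNorm_eq_integral_rpow_norm hP0 ENNReal.coe_ne_top
  have hA : 0 ≤ ∫ x, ‖fderiv ℝ v x‖ ^ p := integral_nonneg fun x => by positivity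
  have hB : 0 ≤ ∫ x, |v x| ^ q := integral_nonneg fun x => by positivity
  have e3 : (∫ x, |v x| ^ q) ^ q⁻¹ ≤ (C1 * C2).toReal * (∫ x, ‖fderiv ℝ v x‖ ^ p) ^ p⁻¹ := by
    have e4 : eLpNorm v Q volume ≤ (C1 * C2) * eLpNorm (fderiv ℝ v) P volume := by
      refine e1.trans ?_
      rw [mul_assoc]
      refine mul_le_mul_right (e2.trans (mul_comm _ _).le) _
    have e5 := ENNReal.toReal_mono (ENNReal.mul_ne_top hC m2.2.ne) e4
    rw [ENNReal.toReal_mul, f1, f2, ENNReal.toReal_ofReal (by positivity), ENNReal.toReal_ofReal (by positivity)] at e5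
    exact e5
  have e6 : (∫ x, |v x| ^ q) ^ q⁻¹ ≤ ((C1 * C2).toReal + 1) * (∫ x, ‖fderiv ℝ v x‖ ^ p) ^ p⁻¹ := by
    have : 0 ≤ (∫ x, ‖fderiv ℝ v x‖ ^ p) ^ p⁻¹ := by positivity
    nlinarith
  have e7 := rpow_le_rpow (by positivity) e6 hp0.le
  rw [mul_rpow (by positivity) (by positivity), ← rpow_mul hB, ← rpow_mul hA, inv_mul_cancel₀ hp0.ne', rpow_one] at e7
  convert e7 using 2
  rw [div_eq_inv_mul]

lemma lam_pos (hN : 2 ≤ N) {p q : ℝ} (hp : 1 < p) (hpq : p < q) (hq : ltCritical N p q) {R : ℝ} (hR : 0 < R) :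
    0 < lambdaPQ p q (ball (0 : EuclideanSpace ℝ (Fin N)) R) := by
  obtain ⟨C, hC, h⟩ := sob hN hp hpq hq R
  have hq0 : 0 < q := by linarith
  refine lt_of_lt_of_le (inv_pos.2 hC) (le_csInf (lam_nonempty p q 0 hR) ?_)
  rintro _ ⟨v, h1, h2, h3, ⟨x, hx, hvx⟩, rfl⟩
  have h4 := h v h1 h2 h3
  unfold rayleighQuot
  rw [setIntegral_eq_integral_of_forall_compl_eq_zero, setIntegral_eq_integral_of_forall_compl_eq_zero]
  · have : 0 < ∫ x, |v x| ^ q := by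
      refine Continuous.integral_pos_of_hasCompactSupport_nonneg_nonzero
        (h1.continuous.abs.rpow_const fun x => Or.inr hq0.le) ?_ (fun x => by positivity) (x := x) ?_
      · exact h2.comp_left (g := fun t => |t| ^ q) (by simp [zero_rpow hq0.ne'])
      · have := abs_pos.2 hvx; positivity
    rw [le_div_iff₀ (by positivity), inv_mul_le_iff₀ hC]
    exact h4
  · intro x hx
    rw [image_eq_zero_of_notMem_tsupport fun h => hx (h3 h)]
    simp [zero_rpow hq0.ne']
  · intro x hx
    rw [fderiv_of_notMem_tsupport ℝ fun h => hx (h3 h)]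
    simp [zero_rpow (by linarith : p ≠ 0)]
end

open MeasureTheory Metric Set Real

section
variable {N : ℕ}
open Filter Topology Module

lemma int_scale (f : EuclideanSpace ℝ (Fin N) → ℝ) (c : EuclideanSpace ℝ (Fin N)) {k : ℝ} (hk : 0 < k) :
    ∫ x, f (c + k • x) = k ^ (-(N : ℝ)) * ∫ x, f x := by
  have := Measure.integral_comp_smul (volume : Measure (EuclideanSpace ℝ (Fin N))) (fun x => f (c + x)) k
  rw [this, integral_add_left_eq_self, smul_eq_mul]
  congr 1
  rw [rpow_neg hk.le, rpow_natCast, abs_of_pos (by positivity)]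
  simp

lemma fderiv_scale (f : EuclideanSpace ℝ (Fin N) → ℝ) (c : EuclideanSpace ℝ (Fin N)) {k : ℝ}
    (x : EuclideanSpace ℝ (Fin N)) :
    fderiv ℝ (fun x => f (c + k • x)) x = k • fderiv ℝ f (c + k • x) := by
  have h1 := fderiv_comp_smul (𝕜 := ℝ) (f := fun y => f (c + y)) (x := x) k
  rw [fderiv_comp_add_left] at h1
  exact h1

lemma scale_alg {A B k p q n : ℝ} (hA : 0 ≤ A) (hB : 0 ≤ B) (hk : 0 < k) :
    (k ^ p * (k ^ (-n) * A)) / (k ^ (-n) * B) ^ (p / q) = A / B ^ (p / q) * k ^ (p + n * p / q - n) := by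
  rw [mul_rpow (by positivity) hB, ← rpow_mul hk.le]
  have : k ^ (p + n * p / q - n) = k ^ p * k ^ (-n) / k ^ (-n * (p / q)) := by
    rw [← rpow_add hk, ← rpow_sub hk]; congr 1; ring
  rw [this]
  have h1 : k ^ (-n * (p / q)) ≠ 0 := by positivity
  rw [div_mul_div_comm]
  congr 1
  · ring
  · ring

lemma lam_scale {p q r R : ℝ} (hp : 0 < p) (hq : 0 < q) (hr : 0 < r) (hR : 0 < R) (c : EuclideanSpace ℝ (Fin N)) :
    lambdaPQ p q (ball (0 : EuclideanSpace ℝ (Fin N)) R) ≤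
      lambdaPQ p q (ball c r) * (r / R) ^ (p + N * p / q - N) := by
  have hk : 0 < r / R := by positivity
  set k := r / R with hkd
  have hkR : k * R = r := by rw [hkd]; field_simp
  have hka : 0 < k ^ (p + N * p / q - N) := by positivity
  rw [← div_le_iff₀ hka]
  refine le_csInf (lam_nonempty p q c hr) ?_
  rintro _ ⟨v, h1, h2, h3, ⟨x, hx, hvx⟩, rfl⟩
  rw [div_le_iff₀ hka]
  have hmem : ∀ y : EuclideanSpace ℝ (Fin N), c + k • y ∈ ball c r ↔ y ∈ ball (0 : EuclideanSpace ℝ (Fin N)) R := fun y => by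
    rw [mem_ball, dist_eq_norm, add_sub_cancel_left, norm_smul, Real.norm_of_nonneg hk.le, ← hkR, mem_ball_zero_iff]
    exact mul_lt_mul_iff_right₀ hk
  have hsupp : tsupport (fun y => v (c + k • y)) ⊆ (fun y => c + k • y) ⁻¹' tsupport v :=
    tsupport_comp_subset_preimage v (by fun_prop)
  have hsub : tsupport (fun y => v (c + k • y)) ⊆ ball 0 R := fun y hy => (hmem y).1 (h3 (hsupp hy))
  refine csInf_le (lam_bdd p q _) ⟨fun y => v (c + k • y), ?_, ?_, hsub, ?_, ?_⟩
  · exact h1.comp (by fun_prop)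
  · exact isCompact_of_isClosed_isBounded (isClosed_tsupport _) (isBounded_ball.subset hsub)
  · have : c + k • (k⁻¹ • (x - c)) = x := by rw [smul_smul, mul_inv_cancel₀ hk.ne', one_smul]; abel
    refine ⟨k⁻¹ • (x - c), ?_, ?_⟩
    · rw [← hmem, this]; exact hx
    · beta_reduce; rw [this]; exact hvx
  · unfold rayleighQuot
    have z1 : ∀ y ∉ ball (0 : EuclideanSpace ℝ (Fin N)) R, v (c + k • y) = 0 := fun y hy =>
      image_eq_zero_of_notMem_tsupport fun h => hy ((hmem y).1 (h3 h))
    have z2 : ∀ y ∉ ball (0 : EuclideanSpace ℝ (Fin N)) R, fderiv ℝ v (c + k • y) = 0 := fun y hy =>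
      fderiv_of_notMem_tsupport ℝ fun h => hy ((hmem y).1 (h3 h))
    simp_rw [fderiv_scale v c]
    rw [setIntegral_eq_integral_of_forall_compl_eq_zero, setIntegral_eq_integral_of_forall_compl_eq_zero,
      setIntegral_eq_integral_of_forall_compl_eq_zero, setIntegral_eq_integral_of_forall_compl_eq_zero]
    · rw [← scale_alg (integral_nonneg fun x => by positivity) (integral_nonneg fun x => by positivity) hk,
        ← int_scale (fun x => |v x| ^ q) c hk, ← int_scale (fun x => ‖fderiv ℝ v x‖ ^ p) c hk,
        ← integral_const_mul]
      simp_rw [norm_smul, Real.norm_of_nonneg hk.le, mul_rpow hk.le (norm_nonneg _)]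
    · intro y hy
      rw [z1 y hy]; simp [zero_rpow hq.ne']
    · intro y hy
      rw [z2 y hy]; simp [zero_rpow hp.ne']
    · intro x hx
      rw [image_eq_zero_of_notMem_tsupport fun h => hx (h3 h)]
      simp [zero_rpow hq.ne']
    · intro x hx
      rw [fderiv_of_notMem_tsupport ℝ fun h => hx (h3 h)]
      simp [zero_rpow hp.ne']
end

open MeasureTheory Metric Set Real

section
variable {E : Type*} [NormedAddCommGroup E] [InnerProductSpace ℝ E] [FiniteDimensional ℝ E]
  [MeasurableSpace E] [BorelSpace E]
open Filter Topology Module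

lemma polar_integral [Nontrivial E] (g : E → ℝ) : ∫ x, g x = ∫ z, g ((z.2 : ℝ) • (z.1 : E))
    ∂((volume : Measure E).toSphere.prod (Measure.volumeIoiPow (finrank ℝ E - 1))) := by
  have h := (volume : Measure E).measurePreserving_homeomorphUnitSphereProd.integral_comp
        (Homeomorph.measurableEmbedding _) (fun z => g ((z.2 : ℝ) • (z.1 : E)))
  rw [← h]
  rw [← restrict_compl_singleton (μ := (volume : Measure E)) 0,
    ← integral_subtype_comap (measurableSet_singleton _).compl, restrict_compl_singleton]
  congr 1
  ext x
  have : ‖(x : E)‖ ≠ 0 := norm_ne_zero_iff.2 x.2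
  simp [smul_smul, this]

lemma polar_integrable [Nontrivial E] {g : E → ℝ} (hg : Integrable g) : Integrable (fun z => g ((z.2 : ℝ) • (z.1 : E)))
    ((volume : Measure E).toSphere.prod (Measure.volumeIoiPow (finrank ℝ E - 1))) := by
  have h := (volume : Measure E).measurePreserving_homeomorphUnitSphereProd.integrable_comp_emb
        (Homeomorph.measurableEmbedding _) (g := fun z => g ((z.2 : ℝ) • (z.1 : E)))
  rw [← h]
  rw [← restrict_compl_singleton (μ := (volume : Measure E)) 0, ← IntegrableOn,
    integrableOn_iff_comap_subtypeVal (by measurability)] at hg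
  convert hg using 1
  ext x
  have : ‖(x : E)‖ ≠ 0 := norm_ne_zero_iff.2 x.2
  simp [smul_smul, this]

lemma star_le [Nontrivial E] {D : Set E} (hD : IsOpen D) (hs : ∀ x ∈ D, ∀ t : ℝ, 0 < t → t ≤ 1 → t • x ∈ D)
    (hb : Bornology.IsBounded D) {F : ℝ → ℝ} (hF : Integrable (fun x : E => F ‖x‖)) {ε : ℝ} (hε : 0 ≤ ε)
    (h : ∀ ρ > 0, ∫ x in ball (0 : E) ρ, F ‖x‖ ≤ ε) : ∫ x in D, F ‖x‖ ≤ ε := by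
  set σ := (volume : Measure E).toSphere
  set ν := Measure.volumeIoiPow (finrank ℝ E - 1)
  have hσ : 0 < σ.real univ := by
    rw [measureReal_def, ENNReal.toReal_pos_iff]
    refine ⟨?_, measure_lt_top _ _⟩
    rw [pos_iff_ne_zero, Measure.measure_univ_ne_zero]
    exact Measure.toSphere_ne_zero _
  have hnorm : ∀ (ω : sphere (0 : E) 1) (r : Ioi (0 : ℝ)), ‖(r : ℝ) • (ω : E)‖ = r := fun ω r => by
    rw [norm_smul, norm_eq_of_mem_sphere, mul_one, Real.norm_of_nonneg r.2.out.le]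
  have hH : ∀ ρ > 0, ∫ r : Ioi (0 : ℝ), (Iio ρ).indicator F (r : ℝ) ∂ν ≤ ε / σ.real univ := fun ρ hρ => by
    have h1 := h ρ hρ
    rw [← integral_indicator measurableSet_ball, polar_integral] at h1
    have : ∀ z : sphere (0 : E) 1 × Ioi (0 : ℝ), (ball (0 : E) ρ).indicator (fun x => F ‖x‖) ((z.2 : ℝ) • (z.1 : E))
        = (Iio ρ).indicator F (z.2 : ℝ) := fun z => by
      simp only [indicator, mem_ball_zero_iff, hnorm, mem_Iio]
    simp_rw [this] at h1
    rw [integral_fun_snd (fun r : Ioi (0 : ℝ) => (Iio ρ).indicator F (r : ℝ)), smul_eq_mul] at h1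
    rw [le_div_iff₀ hσ, mul_comm]; exact h1
  rw [← integral_indicator hD.measurableSet, polar_integral]
  have hI := polar_integrable (hF.indicator hD.measurableSet)
  rw [integral_prod _ hI]
  calc _ ≤ ∫ ω : sphere (0 : E) 1, ε / σ.real univ ∂σ := by
        refine integral_mono hI.integral_prod_left (integrable_const _) fun ω => ?_
        beta_reduce
        by_cases hS : ∃ r : ℝ, 0 < r ∧ r • (ω : E) ∈ D
        · let S := {r : ℝ | 0 < r ∧ r • (ω : E) ∈ D}
          have hSo : IsOpen S := by
            have o1 : IsOpen {r : ℝ | 0 < r} := isOpen_Ioi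
            have o2 : IsOpen {r : ℝ | r • (ω : E) ∈ D} := hD.preimage (by fun_prop)
            exact o1.inter o2
          have hSb : BddAbove S := by
            obtain ⟨T, hT⟩ := hb.exists_norm_le
            refine ⟨T, fun r hr => ?_⟩
            have := hT _ hr.2
            rwa [hnorm ω ⟨r, hr.1⟩] at this
          have hlt : ∀ r ∈ S, r < sSup S := fun r hr => by
            obtain ⟨η, hη, hs⟩ := Metric.isOpen_iff.1 hSo r hr
            have : r + η / 2 ∈ S := hs (by simp [abs_of_pos hη]; linarith)
            linarith [le_csSup hSb this]
          have hmem : ∀ r, 0 < r → r < sSup S → r ∈ S := fun r hr hrs => by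
            obtain ⟨t, ht, hrt⟩ := exists_lt_of_lt_csSup hS hrs
            refine ⟨hr, ?_⟩
            have := hs _ ht.2 (r / t) (div_pos hr ht.1) (by rw [div_le_one ht.1]; exact hrt.le)
            rwa [smul_smul, div_mul_cancel₀ _ ht.1.ne'] at this
          obtain ⟨r0, hr0⟩ := hS
          refine le_trans (le_of_eq ?_) (hH (sSup S) (hr0.1.trans (hlt r0 hr0)))
          congr 1
          ext r
          simp only [indicator, hnorm, mem_Iio]
          congr 1
          exact propext ⟨fun h => hlt r ⟨r.2, h⟩, fun h => (hmem r r.2 h).2⟩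
        · push Not at hS
          refine le_trans (le_of_eq ?_) (div_nonneg hε hσ.le)
          refine integral_eq_zero_of_ae (Eventually.of_forall fun r => ?_)
          exact indicator_of_notMem (hS r r.2) _
    _ = ε := by
        rw [integral_const, smul_eq_mul, mul_div_cancel₀ _ hσ.ne']
end

open MeasureTheory Metric Set Real

section
variable {N : ℕ}
open Filter Topology Module

lemma near_min (hN : 2 ≤ N) {p q R ε : ℝ} (hp : 1 < p) (hpq : p < q) (hR : 0 < R) (hε : 0 < ε) :
    ∃ (w : EuclideanSpace ℝ (Fin N) → ℝ) (K : NNReal), LipschitzWith K w ∧ (∀ x, 0 ≤ w x) ∧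
      (∀ x, R ≤ ‖x‖ → w x = 0) ∧ (∀ x y, ‖x‖ ≤ ‖y‖ → w y ≤ w x) ∧ ∫ x, w x ^ q = 1 ∧
      ∫ x, ‖fderiv ℝ w x‖ ^ p ≤ lambdaPQ p q (ball (0 : EuclideanSpace ℝ (Fin N)) R) + ε := by
  have hp0 : 0 < p := by linarith
  have hq0 : 0 < q := by linarith
  obtain ⟨_, ⟨v, h1, h2, h3, ⟨x, hx, hvx⟩, rfl⟩, hlt⟩ := exists_lt_of_csInf_lt (lam_nonempty p q 0 hR)
    (show sInf _ < lambdaPQ p q (ball (0 : EuclideanSpace ℝ (Fin N)) R) + ε from lt_add_of_pos_right _ hε)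
  unfold rayleighQuot at hlt
  rw [setIntegral_eq_integral_of_forall_compl_eq_zero, setIntegral_eq_integral_of_forall_compl_eq_zero] at hlt
  rotate_left
  · intro x hx
    rw [image_eq_zero_of_notMem_tsupport fun h => hx (h3 h)]
    simp [zero_rpow hq0.ne']
  · intro x hx
    rw [fderiv_of_notMem_tsupport ℝ fun h => hx (h3 h)]
    simp [zero_rpow hp0.ne']
  have hB : 0 < ∫ x, |v x| ^ q := by
      refine Continuous.integral_pos_of_hasCompactSupport_nonneg_nonzero
        (h1.continuous.abs.rpow_const fun x => Or.inr hq0.le) ?_ (fun x => by positivity) (x := x) ?_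
      · exact h2.comp_left (g := fun t => |t| ^ q) (by simp [zero_rpow hq0.ne'])
      · have := abs_pos.2 hvx; positivity
  set B := ∫ x, |v x| ^ q with hBd
  set A := ∫ x, ‖fderiv ℝ v x‖ ^ p with hAd
  obtain ⟨K, hK⟩ := h1.lipschitzWith_of_hasCompactSupport h2 (by simp)
  obtain ⟨M, hM⟩ := h2.exists_bound_of_continuous h1.continuous
  have hvz : ∀ x, R ≤ ‖x‖ → v x = 0 := fun x hx =>
    image_eq_zero_of_notMem_tsupport fun h => by
      have := h3 h
      rw [mem_ball_zero_iff] at this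
      linarith
  have hdom : ∀ x y, abs (abs (v y) - abs (v x)) ≤ |v y - v x| := fun x y => abs_abs_sub_abs_le_abs_sub _ _
  have hK' : LipschitzWith K (fun x => |v x|) := LipschitzWith.of_dist_le_mul fun x y => by
    have := hK.dist_le_mul x y
    rw [Real.dist_eq] at this ⊢
    exact (hdom y x).trans this
  have hvz' : ∀ x, R ≤ ‖x‖ → |v x| = 0 := fun x hx => by rw [hvz x hx, abs_zero]
  obtain ⟨w0, hX, hmono⟩ := ps_exists (p := p) (q := q) hp.le hq0 hK' (fun x => abs_nonneg _) hM hvz'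
  obtain ⟨e, he⟩ : ∃ e : EuclideanSpace ℝ (Fin N), ‖e‖ = 1 := ⟨EuclideanSpace.single ⟨0, by omega⟩ 1, by simp⟩
  have hg := ps_grad hp.le hX.lip hK' hX.zero hvz' he hX.en
  have hg2 : ∫ x, ‖fderiv ℝ w0 x‖ ^ p ≤ ∫ x, ‖fderiv ℝ (fun x => |v x|) x‖ ^ p := by
    have i1 := grad_int hp0 hX.lip hX.zero
    have i2 := grad_int hp0 hK' hvz'
    rw [← ofReal_integral_eq_lintegral_ofReal i1 (Eventually.of_forall fun x => by positivity),
      ← ofReal_integral_eq_lintegral_ofReal i2 (Eventually.of_forall fun x => by positivity)] at hg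
    exact (ENNReal.ofReal_le_ofReal_iff (integral_nonneg fun x => by positivity)).1 hg
  have hg3 : ∫ x, ‖fderiv ℝ (fun x => |v x|) x‖ ^ p ≤ A := by
    refine integral_mono (grad_int hp0 hK' hvz') (grad_int hp0 hK hvz) fun x => ?_
    exact rpow_le_rpow (norm_nonneg _) (fderiv_dom (fun y => hdom x y)
      (h1.differentiable (by simp) x)) hp0.le
  have hint : ∫ x, w0 x ^ q = B := hX.int
  set b := B ^ (-(1 / q)) with hb
  have hb0 : 0 < b := by positivity
  have hbq : b ^ q = B⁻¹ := by
    rw [hb, ← rpow_mul hB.le, ← rpow_neg_one]; congr 1; field_simp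
  have hbp : b ^ p = (B ^ (p / q))⁻¹ := by
    rw [hb, ← rpow_mul hB.le, ← rpow_neg hB.le]; congr 1; field_simp
  refine ⟨fun x => b * w0 x, b.toNNReal * K, ?_, fun x => mul_nonneg hb0.le (hX.nonneg x),
    fun x hx => by beta_reduce; rw [hX.zero x hx, mul_zero], fun x y hxy => mul_le_mul_of_nonneg_left (hmono x y hxy) hb0.le, ?_, ?_⟩
  · refine LipschitzWith.of_dist_le_mul fun x y => ?_
    rw [Real.dist_eq, ← mul_sub, abs_mul, abs_of_pos hb0, NNReal.coe_mul, Real.coe_toNNReal b hb0.le, mul_assoc]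
    exact mul_le_mul_of_nonneg_left (hX.lip.dist_le_mul x y) hb0.le
  · simp_rw [mul_rpow hb0.le (hX.nonneg _)]
    rw [integral_const_mul, hint, hbq, inv_mul_cancel₀ hB.ne']
  · have : ∀ x, ‖fderiv ℝ (fun x => b * w0 x) x‖ ^ p = b ^ p * ‖fderiv ℝ w0 x‖ ^ p := fun x => by
      change ‖fderiv ℝ (b • w0) x‖ ^ p = _
      rw [fderiv_const_smul_field, Pi.smul_apply, norm_smul, Real.norm_of_nonneg hb0.le, mul_rpow hb0.le (norm_nonneg _)]
    simp_rw [this]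
    rw [integral_const_mul, hbp, ← div_eq_inv_mul]
    refine le_trans ?_ hlt.le
    gcongr
    exact hg2.trans hg3
end

open MeasureTheory Metric Set Real

section
variable {N : ℕ}
open Filter Topology Module

lemma radial_grad {w : EuclideanSpace ℝ (Fin N) → ℝ} (hm : ∀ x y, ‖x‖ ≤ ‖y‖ → w y ≤ w x)
    {x y : EuclideanSpace ℝ (Fin N)} (h : ‖x‖ = ‖y‖) : ‖fderiv ℝ w x‖ = ‖fderiv ℝ w y‖ := by
  let L := (ℝ ∙ (x - y))ᗮ.reflection
  have hL : L x = y := Submodule.reflection_sub h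
  have hw : w ∘ L = w := by
    ext z
    exact le_antisymm (hm _ _ (by simp)) (hm _ _ (by simp))
  have h2 := L.toContinuousLinearEquiv.comp_right_fderiv (f := w) (x := x)
  have h3 : fderiv ℝ w x = (fderiv ℝ w y).comp (L.toContinuousLinearEquiv : EuclideanSpace ℝ (Fin N) →L[ℝ] EuclideanSpace ℝ (Fin N)) := by
    rw [← hL]
    conv_lhs => rw [← hw]
    exact h2
  rw [h3]
  exact ContinuousLinearMap.opNorm_comp_linearIsometryEquiv _ L

lemma exists_norm (hN : 2 ≤ N) {ρ : ℝ} (hρ : 0 ≤ ρ) : ∃ y : EuclideanSpace ℝ (Fin N), ‖y‖ = ρ :=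
  ⟨EuclideanSpace.single ⟨0, by omega⟩ ρ, by simp [abs_of_nonneg hρ]⟩

lemma trunc (hN : 2 ≤ N) {p q R ε : ℝ} (hp : 0 < p) (hpq : p < q) (hR : 0 < R) {K : NNReal}
    {w : EuclideanSpace ℝ (Fin N) → ℝ} (hw : LipschitzWith K w) (h0 : ∀ x, 0 ≤ w x)
    (hz : ∀ x, R ≤ ‖x‖ → w x = 0) (hm : ∀ x y, ‖x‖ ≤ ‖y‖ → w y ≤ w x) (h1 : ∫ x, w x ^ q = 1)
    {l : ℝ} (hl : l = lambdaPQ p q (ball (0 : EuclideanSpace ℝ (Fin N)) R)) (hl0 : 0 ≤ l)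
    (hε : ∫ x, ‖fderiv ℝ w x‖ ^ p ≤ l + ε) {ρ : ℝ} (hρ : 0 < ρ) :
    ∫ x in ball (0 : EuclideanSpace ℝ (Fin N)) ρ, (‖fderiv ℝ w x‖ ^ p - l * w x ^ q) ≤ ε := by
  have hq : 0 < q := by linarith
  obtain ⟨y, hy⟩ := exists_norm hN hρ.le
  let g : EuclideanSpace ℝ (Fin N) → ℝ := fun x => min (w x) (w y)
  have hdom : ∀ x z, |g z - g x| ≤ |w z - w x| := fun x z => by
    have := abs_min_sub_min_le_max (w z) (w y) (w x) (w y)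
    simpa using this
  have hgl : LipschitzWith K g := LipschitzWith.of_dist_le_mul fun x z => by
    have := hw.dist_le_mul x z
    rw [Real.dist_eq] at this ⊢
    exact (hdom z x).trans this
  have hg0 : ∀ x, 0 ≤ g x := fun x => le_min (h0 x) (h0 y)
  have hgz : ∀ x, R ≤ ‖x‖ → g x = 0 := fun x hx =>
    le_antisymm ((min_le_left _ _).trans (hz x hx).le) (hg0 x)
  have hlam := lam_le (p := p) (q := q) hp hq hR hgl hg0 hgz
  rw [← hl] at hlam
  set B := ball (0 : EuclideanSpace ℝ (Fin N)) ρ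
  have hBm : MeasurableSet B := measurableSet_ball
  have iw := int_rpow hq hw.continuous hz
  have ig := int_rpow hq hgl.continuous hgz
  have iD := grad_int hp hw hz
  have iG := grad_int hp hgl hgz
  have e1 : ∫ x, ‖fderiv ℝ g x‖ ^ p ≤ ∫ x in Bᶜ, ‖fderiv ℝ w x‖ ^ p := by
    rw [← integral_indicator hBm.compl]
    refine integral_mono_ae iG (iD.indicator hBm.compl) ?_
    filter_upwards [hw.ae_differentiableAt (μ := (volume : Measure (EuclideanSpace ℝ (Fin N))))] with x hx
    by_cases hxB : x ∈ B
    · rw [indicator_of_notMem (by simpa using hxB)]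
      have : g =ᶠ[𝓝 x] fun _ => w y := by
        filter_upwards [isOpen_ball.mem_nhds hxB] with z hzB
        refine min_eq_right (hm _ _ ?_)
        rw [hy]; exact (mem_ball_zero_iff.1 hzB).le
      rw [this.fderiv_eq]
      simp [zero_rpow hp.ne']
    · rw [indicator_of_mem (by simpa using hxB)]
      exact rpow_le_rpow (norm_nonneg _) (fderiv_dom (fun z => hdom x z) hx) hp.le
  have e2 : ∫ x in Bᶜ, w x ^ q ≤ ∫ x, g x ^ q := by
    rw [← integral_indicator hBm.compl]
    refine integral_mono (iw.indicator hBm.compl) ig fun x => ?_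
    by_cases hxB : x ∈ B
    · rw [indicator_of_notMem (by simpa using hxB)]
      exact rpow_nonneg (hg0 x) _
    · rw [indicator_of_mem (by simpa using hxB)]
      have : g x = w x := min_eq_left (hm _ _ (by
        rw [hy]; by_contra h; exact hxB (mem_ball_zero_iff.2 (not_le.1 h))))
      rw [this]
  have s1 := integral_add_compl hBm iw
  have s2 := integral_add_compl hBm iD
  set m := ∫ x in Bᶜ, w x ^ q
  have hm0 : 0 ≤ m := integral_nonneg fun x => rpow_nonneg (h0 x) _
  have hb0 : 0 ≤ ∫ x in B, w x ^ q := integral_nonneg fun x => rpow_nonneg (h0 x) _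
  have hm1 : m ≤ 1 := by linarith
  have e3 : m ≤ m ^ (p / q) := by
    have h := rpow_le_rpow_of_exponent_ge' hm0 hm1 (div_pos hp hq).le
      (show p / q ≤ 1 by rw [div_le_one hq]; exact hpq.le)
    rwa [rpow_one] at h
  have e4 : m ^ (p / q) ≤ (∫ x, g x ^ q) ^ (p / q) := rpow_le_rpow hm0 e2 (div_pos hp hq).le
  have e5 := mul_le_mul_of_nonneg_left (e3.trans e4) hl0
  rw [integral_sub iD.integrableOn (iw.const_mul l).integrableOn, integral_const_mul]
  have : ∫ x in B, w x ^ q = 1 - m := by linarith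
  rw [this]
  linarith

/-- the key estimate on star-shaped sets -/
lemma star_est (hN : 2 ≤ N) {p q R ε : ℝ} (hp : 0 < p) (hpq : p < q) (hR : 0 < R) {K : NNReal}
    {w : EuclideanSpace ℝ (Fin N) → ℝ} (hw : LipschitzWith K w) (h0 : ∀ x, 0 ≤ w x)
    (hz : ∀ x, R ≤ ‖x‖ → w x = 0) (hm : ∀ x y, ‖x‖ ≤ ‖y‖ → w y ≤ w x) (h1 : ∫ x, w x ^ q = 1)
    {l : ℝ} (hl : l = lambdaPQ p q (ball (0 : EuclideanSpace ℝ (Fin N)) R)) (hl0 : 0 ≤ l) (hε0 : 0 ≤ ε)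
    (hε : ∫ x, ‖fderiv ℝ w x‖ ^ p ≤ l + ε)
    {D : Set (EuclideanSpace ℝ (Fin N))} (hD : IsOpen D)
    (hs : ∀ x ∈ D, ∀ t : ℝ, 0 < t → t ≤ 1 → t • x ∈ D) (hb : Bornology.IsBounded D) :
    ∫ x in D, ‖fderiv ℝ w x‖ ^ p ≤ l * (∫ x in D, w x ^ q) + ε := by
  have hq : 0 < q := by linarith
  have : Nontrivial (EuclideanSpace ℝ (Fin N)) := by
    obtain ⟨e, he⟩ := exists_norm hN zero_le_one
    exact ⟨e, 0, fun h => by simp [h] at he⟩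
  have iw := int_rpow hq hw.continuous hz
  have iD := grad_int hp hw hz
  obtain ⟨e, he⟩ := exists_norm hN zero_le_one
  let F : ℝ → ℝ := fun r => ‖fderiv ℝ w (r • e)‖ ^ p - l * w (r • e) ^ q
  have hF : ∀ x, ‖fderiv ℝ w x‖ ^ p - l * w x ^ q = F ‖x‖ := fun x => by
    have hn : ‖x‖ = ‖‖x‖ • e‖ := by rw [norm_smul, he, mul_one, norm_norm]
    have hw' : w x = w (‖x‖ • e) := le_antisymm (hm _ _ hn.ge) (hm _ _ hn.le)
    simp only [F]
    rw [← radial_grad hm hn, ← hw']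
  have hi := iD.sub (iw.const_mul l)
  have key : ∫ x in D, F ‖x‖ ≤ ε := by
    refine star_le hD hs hb ?_ hε0 fun ρ hρ => ?_
    · simp_rw [← hF]; exact hi
    · simp_rw [← hF]
      exact trunc hN hp hpq hR hw h0 hz hm h1 hl hl0 hε hρ
  simp_rw [← hF] at key
  rw [integral_sub iD.integrableOn (iw.const_mul l).integrableOn, integral_const_mul] at key
  linarith
end

open MeasureTheory Metric Set Real

section
variable {N : ℕ}
open Filter Topology Module

lemma alpha_pos {p q : ℝ} (hp : 1 < p) (hpq : p < q) (hq : ltCritical N p q) :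
    0 < p + N * p / q - N := by
  have hq0 : 0 < q := by linarith
  rcases lt_or_ge p N with h | h
  · have h1 := hq h
    rw [lt_div_iff₀ (by linarith)] at h1
    have : (N : ℝ) - p < N * p / q := by
      rw [lt_div_iff₀ hq0]; linarith
    linarith
  · have : 0 < N * p / q ∨ (N : ℝ) = 0 := by
      rcases (Nat.cast_nonneg N : (0:ℝ) ≤ N).eq_or_lt with h | h
      · right; exact h.symm
      · left; positivity
    rcases this with h2 | h2
    · linarith
    · rw [h2]; simp; linarith

lemma minkowski {q R : ℝ} (hq : 1 ≤ q) {f g : EuclideanSpace ℝ (Fin N) → ℝ} (hf : Continuous f) (hg : Continuous g)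
    (hf0 : ∀ x, 0 ≤ f x) (hg0 : ∀ x, 0 ≤ g x)
    (hfz : ∀ x, R ≤ ‖x‖ → f x = 0) (hgz : ∀ x, R ≤ ‖x‖ → g x = 0) :
    (∫ x, (f x + g x) ^ q) ^ q⁻¹ ≤ (∫ x, f x ^ q) ^ q⁻¹ + (∫ x, g x ^ q) ^ q⁻¹ := by
  have hq0 : 0 < q := by linarith
  let Q : NNReal := ⟨q, hq0.le⟩
  have hQ0 : (Q : ENNReal) ≠ 0 := by
    rw [ne_eq, ENNReal.coe_eq_zero, ← NNReal.coe_eq_zero]; exact hq0.ne'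
  have m1 : MemLp f Q volume := hf.memLp_of_hasCompactSupport (cs_of_zero hfz)
  have m2 : MemLp g Q volume := hg.memLp_of_hasCompactSupport (cs_of_zero hgz)
  have h := eLpNorm_add_le m1.1 m2.1 (p := Q) (by exact_mod_cast hq)
  have h2 := ENNReal.toReal_mono (ENNReal.add_ne_top.2 ⟨m1.2.ne, m2.2.ne⟩) h
  rw [ENNReal.toReal_add m1.2.ne m2.2.ne, (m1.add m2).eLpNorm_eq_integral_rpow_norm hQ0 ENNReal.coe_ne_top,
    m1.eLpNorm_eq_integral_rpow_norm hQ0 ENNReal.coe_ne_top,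
    m2.eLpNorm_eq_integral_rpow_norm hQ0 ENNReal.coe_ne_top,
    ENNReal.toReal_ofReal (by positivity), ENNReal.toReal_ofReal (by positivity),
    ENNReal.toReal_ofReal (by positivity)] at h2
  simp_rw [Pi.add_apply, Real.norm_of_nonneg (hf0 _), Real.norm_of_nonneg (hg0 _),
    Real.norm_of_nonneg (add_nonneg (hf0 _) (hg0 _))] at h2
  exact h2

lemma nonconc (hN : 2 ≤ N) {p q R : ℝ} (hp : 1 < p) (hpq : p < q) (hq : ltCritical N p q) (hR : 0 < R)
    {l : ℝ} (hl : l = lambdaPQ p q (ball (0 : EuclideanSpace ℝ (Fin N)) R)) (hl0 : 0 < l) :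
    ∃ c > 0, ∃ ε0 > 0, ∀ ε ≤ ε0, ∀ (K : NNReal) (w : EuclideanSpace ℝ (Fin N) → ℝ), LipschitzWith K w →
      (∀ x, 0 ≤ w x) → (∀ x, R ≤ ‖x‖ → w x = 0) → (∀ x y, ‖x‖ ≤ ‖y‖ → w y ≤ w x) → ∫ x, w x ^ q = 1 →
      ∫ x, ‖fderiv ℝ w x‖ ^ p ≤ l + ε → ∀ x, ‖x‖ ≤ R / 2 → c ≤ w x := by
  have hp0 : 0 < p := by linarith
  have hq0 : 0 < q := by linarith
  have hα := alpha_pos hp hpq hq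
  set α := p + N * p / q - N with hαd
  set θ : ℝ := (1 / 2) ^ α with hθd
  have hθ0 : 0 < θ := by positivity
  have hθ1 : θ < 1 := rpow_lt_one (by norm_num) (by norm_num) hα
  set V := volume.real (closedBall (0 : EuclideanSpace ℝ (Fin N)) R) with hV
  have hV0 : 0 < V := by
    rw [hV, measureReal_def, ENNReal.toReal_pos_iff]
    exact ⟨measure_closedBall_pos _ _ hR, measure_closedBall_lt_top⟩
  set θ1 := ((1 + θ) / 2) ^ p⁻¹ with hθ1d
  have hθ11 : θ1 < 1 := rpow_lt_one (by positivity) (by linarith) (by positivity)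
  refine ⟨(1 - θ1) / V ^ q⁻¹, div_pos (by linarith) (by positivity), l * (1 - θ) / 2,
    by have : 0 < 1 - θ := by linarith
       positivity, ?_⟩
  intro ε hε K w hw h0 hz hm h1 hE x hx
  obtain ⟨y, hy⟩ := exists_norm hN (half_pos hR).le
  refine le_trans ?_ (hm x y (by rw [hy]; exact hx))
  set u := w y with hu
  let g : EuclideanSpace ℝ (Fin N) → ℝ := fun x => max (w x - u) 0
  let h : EuclideanSpace ℝ (Fin N) → ℝ := fun x => min (w x) u
  have hgh : ∀ x, g x + h x = w x := fun x => by
    simp only [g, h]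
    rcases le_total (w x) u with h | h
    · rw [max_eq_right (by linarith), min_eq_left h, zero_add]
    · rw [max_eq_left (by linarith), min_eq_right h]; ring
  have hg0 : ∀ x, 0 ≤ g x := fun x => le_max_right _ _
  have hh0 : ∀ x, 0 ≤ h x := fun x => le_min (h0 x) (h0 y)
  have hdom : ∀ x z, |g z - g x| ≤ |w z - w x| := fun x z => by
    refine (abs_max_sub_max_le_abs _ _ _).trans (le_of_eq ?_)
    congr 1; ring
  have hgl : LipschitzWith K g := LipschitzWith.of_dist_le_mul fun x z => by
    have := hw.dist_le_mul x z
    rw [Real.dist_eq] at this ⊢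
    exact (hdom z x).trans this
  have hgz : ∀ x, R / 2 ≤ ‖x‖ → g x = 0 := fun x hx => max_eq_right (by
    have := hm y x (by rw [hy]; exact hx)
    linarith)
  have hgz' : ∀ x, R ≤ ‖x‖ → g x = 0 := fun x hx => hgz x (by linarith)
  have hhz : ∀ x, R ≤ ‖x‖ → h x = 0 := fun x hx => le_antisymm ((min_le_left _ _).trans (hz x hx).le) (hh0 x)
  have hhc : Continuous h := hw.continuous.min continuous_const
  let W : EuclideanSpace ℝ (Fin N) → ℝ := fun x => g (0 + (1 / 2 : ℝ) • x)
  have hWl : LipschitzWith K W := LipschitzWith.of_dist_le_mul fun x z => by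
    refine (hgl.dist_le_mul _ _).trans ?_
    refine mul_le_mul_of_nonneg_left ?_ K.2
    rw [zero_add, zero_add, dist_smul₀, Real.norm_of_nonneg (by norm_num)]
    have := dist_nonneg (x := x) (y := z)
    linarith
  have hlam := lam_le (p := p) (q := q) hp0 hq0 hR hWl (fun x => hg0 _) (fun x hx => hgz _ (by
    rw [zero_add, norm_smul, Real.norm_of_nonneg (by norm_num)]; linarith))
  rw [← hl] at hlam
  have hk : (0 : ℝ) < 1 / 2 := by norm_num
  simp only [W] at hlam
  simp_rw [fderiv_scale g 0, norm_smul, Real.norm_of_nonneg hk.le, mul_rpow hk.le (norm_nonneg _)] at hlam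
  rw [integral_const_mul, int_scale (fun x => g x ^ q) 0 hk, int_scale (fun x => ‖fderiv ℝ g x‖ ^ p) 0 hk] at hlam
  have eD : ∫ x, ‖fderiv ℝ g x‖ ^ p ≤ l + ε := by
    refine le_trans ?_ hE
    refine integral_mono_ae (grad_int hp0 hgl hgz') (grad_int hp0 hw hz) ?_
    filter_upwards [hw.ae_differentiableAt (μ := (volume : Measure (EuclideanSpace ℝ (Fin N))))] with x hx
    exact rpow_le_rpow (norm_nonneg _) (fderiv_dom (fun z => hdom x z) hx) hp0.le
  set A := ∫ x, g x ^ q with hA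
  set G := ∫ x, ‖fderiv ℝ g x‖ ^ p with hG
  have hA0 : 0 ≤ A := integral_nonneg fun x => rpow_nonneg (hg0 x) _
  have hG0 : 0 ≤ G := integral_nonneg fun x => by positivity
  have e1 : l * A ^ (p / q) ≤ θ * G := by
    have e := scale_alg (A := G) (B := 1) (p := p) (q := q) (n := N) hG0 zero_le_one hk
    rw [one_rpow, div_one, mul_one] at e
    rw [mul_comm θ, hθd, hαd, ← e]
    rw [mul_rpow (by positivity) hA0] at hlam
    rw [le_div_iff₀ (by positivity)]
    linarith
  have e2 : A ^ (p / q) ≤ (1 + θ) / 2 := by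
    have e3 : θ * G ≤ θ * (l + l * (1 - θ) / 2) := mul_le_mul_of_nonneg_left (by linarith) hθ0.le
    have e4 : l * A ^ (p / q) ≤ l * ((1 + θ) / 2) := by nlinarith [mul_nonneg hl0.le (sq_nonneg (1 - θ))]
    exact le_of_mul_le_mul_left e4 hl0
  have e3 : A ^ q⁻¹ ≤ θ1 := by
    have := rpow_le_rpow (by positivity) e2 (inv_nonneg.2 hp0.le)
    rw [← rpow_mul hA0] at this
    convert this using 2
    field_simp
  have e4 := minkowski (R := R) (hp.trans hpq).le hgl.continuous hhc hg0 hh0 hgz' hhz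
  simp_rw [hgh] at e4
  rw [h1, one_rpow] at e4
  have hu0 : 0 ≤ u := h0 y
  have e5 : (∫ x, h x ^ q) ^ q⁻¹ ≤ u * V ^ q⁻¹ := by
    have e6 : ∫ x, h x ^ q ≤ u ^ q * V := by
      calc _ ≤ ∫ x, (closedBall (0 : EuclideanSpace ℝ (Fin N)) R).indicator (fun _ => u ^ q) x := by
            refine integral_mono (int_rpow hq0 hhc hhz) (ind_int R _) fun x => ?_
            by_cases hx : x ∈ closedBall (0 : EuclideanSpace ℝ (Fin N)) R
            · rw [indicator_of_mem hx]
              exact rpow_le_rpow (hh0 x) (min_le_right _ _) hq0.le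
            · rw [indicator_of_notMem hx]
              beta_reduce
              rw [hhz x (by simp at hx; exact hx.le), zero_rpow hq0.ne']
        _ = _ := by
            rw [integral_indicator measurableSet_closedBall, setIntegral_const, smul_eq_mul, mul_comm]
    have e7 := rpow_le_rpow (integral_nonneg fun x => rpow_nonneg (hh0 x) _) e6 (inv_nonneg.2 hq0.le)
    rw [mul_rpow (by positivity) hV0.le, ← rpow_mul hu0, mul_inv_cancel₀ hq0.ne', rpow_one] at e7
    exact e7
  rw [div_le_iff₀ (by positivity)]
  linarith
end

open MeasureTheory Metric Set Real

section
variable {N : ℕ}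
open Filter Topology Module

lemma fin_alg {p q a b m0 m1 k0 k1 δ l ε : ℝ} (hp : 0 < p) (hpq : p < q) (ha : 0 < a) (hb : 0 < b)
    (hk0 : 0 < k0) (hk1 : 0 < k1) (h0 : k0 ≤ m0) (h1 : k1 ≤ m1) (hm : m0 + m1 ≤ 1 - δ)
    (hl : 0 ≤ l) (hε : 0 ≤ ε) :
    (a ^ p * (l * m0 + ε) + b ^ p * (l * m1 + ε)) / (a ^ q * m0 + b ^ q * m1) ^ (p / q) ≤
      l * (1 - δ) ^ (1 - p / q) + ε * (k0 ^ (-(p / q)) + k1 ^ (-(p / q))) := by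
  have hq : 0 < q := hp.trans hpq
  have hm0 : 0 < m0 := hk0.trans_le h0
  have hm1 : 0 < m1 := hk1.trans_le h1
  have hS : 0 < a ^ q * m0 + b ^ q * m1 := by positivity
  set S := a ^ q * m0 + b ^ q * m1 with hSd
  have hθ : p / q < 1 := by rw [div_lt_one hq]; exact hpq
  have hθ0 : 0 < p / q := by positivity
  have key : ∀ {a k : ℝ}, 0 < a → 0 < k → a ^ q * k ≤ S → a ^ p ≤ S ^ (p / q) * k ^ (-(p / q)) := by
    intro a k ha hk h
    have h2 := rpow_le_rpow (by positivity) h hθ0.le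
    rw [mul_rpow (by positivity) hk.le, ← rpow_mul ha.le, mul_div_cancel₀ _ hq.ne'] at h2
    rw [rpow_neg hk.le, ← div_eq_mul_inv, le_div_iff₀ (by positivity)]
    exact h2
  have e0 := key ha hk0 (by
    have : a ^ q * k0 ≤ a ^ q * m0 := by gcongr
    have : 0 < b ^ q * m1 := by positivity
    linarith)
  have e1 := key hb hk1 (by
    have : b ^ q * k1 ≤ b ^ q * m1 := by gcongr
    have : 0 < a ^ q * m0 := by positivity
    linarith)
  have hold : a ^ p * m0 + b ^ p * m1 ≤ S ^ (p / q) * (1 - δ) ^ (1 - p / q) := by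
    have hc : HolderConjugate (q / p) (1 / (1 - p / q)) := by
      have : 0 < 1 - p / q := by linarith
      rw [Real.holderConjugate_iff]
      refine ⟨by rw [lt_div_iff₀ hp]; linarith, ?_⟩
      rw [inv_div, one_div, inv_inv]; ring
    have := Real.inner_le_Lp_mul_Lq_of_nonneg (Finset.univ : Finset (Fin 2)) hc
      (f := ![a ^ p * m0 ^ (p / q), b ^ p * m1 ^ (p / q)])
      (g := ![m0 ^ (1 - p / q), m1 ^ (1 - p / q)])
      (by intro i _; fin_cases i <;> simp <;> positivity)
      (by intro i _; fin_cases i <;> simp <;> positivity)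
    simp only [Fin.sum_univ_two, Matrix.cons_val_zero, Matrix.cons_val_one] at this
    have hne : 1 - p / q ≠ 0 := by linarith
    have t1 : ∀ {m : ℝ}, 0 < m → m ^ (p / q) * m ^ (1 - p / q) = m := by
      intro m hm; rw [← rpow_add hm]; simp
    have t2 : ∀ {m : ℝ}, 0 < m → (m ^ (1 - p / q)) ^ (1 / (1 - p / q)) = m := by
      intro m hm; rw [← rpow_mul hm.le, mul_one_div_cancel hne, rpow_one]
    have t3 : ∀ {a m : ℝ}, 0 < a → 0 < m → (a ^ p * m ^ (p / q)) ^ (q / p) = a ^ q * m := by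
      intro a m ha hm
      rw [mul_rpow (by positivity) (by positivity), ← rpow_mul ha.le, ← rpow_mul hm.le]
      congr 1
      · congr 1; field_simp
      · rw [show p / q * (q / p) = 1 by field_simp, rpow_one]
    rw [mul_assoc, t1 hm0, mul_assoc, t1 hm1, t2 hm0, t2 hm1, t3 ha hm0, t3 hb hm1, one_div_div, one_div_one_div] at this
    refine this.trans ?_
    gcongr
  rw [div_le_iff₀ (by positivity)]
  nlinarith [mul_le_mul_of_nonneg_left hold hl, mul_le_mul_of_nonneg_left e0 hε, mul_le_mul_of_nonneg_left e1 hε]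

lemma set_trans (Ω : Set (EuclideanSpace ℝ (Fin N))) (hΩ : IsOpen Ω) (f : EuclideanSpace ℝ (Fin N) → ℝ) (c : EuclideanSpace ℝ (Fin N)) :
    ∫ x in Ω, f (x - c) = ∫ x in {y | y + c ∈ Ω}, f x := by
  have hD : IsOpen {y | y + c ∈ Ω} := hΩ.preimage (by fun_prop : Continuous fun y => y + c)
  rw [← integral_indicator hΩ.measurableSet, ← integral_indicator hD.measurableSet,
    ← integral_add_right_eq_self _ c]
  congr 1
  ext x
  by_cases h : x + c ∈ Ω
  · rw [indicator_of_mem h, indicator_of_mem (show x ∈ {y | y + c ∈ Ω} from h), add_sub_cancel_right]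
  · rw [indicator_of_notMem h, indicator_of_notMem (show x ∉ {y | y + c ∈ Ω} from h)]

lemma mu_test {p q R : ℝ} (hp : 1 < p) (hpq : p < q) {K : NNReal}
    {w : EuclideanSpace ℝ (Fin N) → ℝ} (hw : LipschitzWith K w) (h0 : ∀ x, 0 ≤ w x)
    (hz : ∀ x, R ≤ ‖x‖ → w x = 0) {Ω : Set (EuclideanSpace ℝ (Fin N))}
    {x0 x1 : EuclideanSpace ℝ (Fin N)} (hd : dist x0 x1 = 2 * R)
    (hi0 : 0 < ∫ x in Ω, w (x - x0) ^ (q - 1)) (hi1 : 0 < ∫ x in Ω, w (x - x1) ^ (q - 1)) :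
    ∃ a b : ℝ, 0 < a ∧ 0 < b ∧ muPQ p q Ω ≤
      (a ^ p * (∫ x in Ω, ‖fderiv ℝ w (x - x0)‖ ^ p) + b ^ p * (∫ x in Ω, ‖fderiv ℝ w (x - x1)‖ ^ p)) /
      (a ^ q * (∫ x in Ω, w (x - x0) ^ q) + b ^ q * (∫ x in Ω, w (x - x1) ^ q)) ^ (p / q) := by
  have hq : 1 < q := hp.trans hpq
  set I0 := ∫ x in Ω, w (x - x0) ^ (q - 1) with hI0
  set I1 := ∫ x in Ω, w (x - x1) ^ (q - 1) with hI1
  have hq1 : 0 < q - 1 := by linarith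
  have hpw : ∀ {I : ℝ}, 0 < I → (I ^ (-(1 / (q - 1)))) ^ (q - 1) = I⁻¹ := by
    intro I hI
    rw [← rpow_mul hI.le, show -(1 / (q - 1)) * (q - 1) = -1 by field_simp, rpow_neg_one]
  have ha : 0 < I0 ^ (-(1 / (q - 1))) := by positivity
  have hb : 0 < I1 ^ (-(1 / (q - 1))) := by positivity
  have ha1 := hpw hi0
  have hb1 := hpw hi1
  set a := I0 ^ (-(1 / (q - 1)))
  set b := I1 ^ (-(1 / (q - 1)))
  have hor : ∀ x, w (x - x0) = 0 ∨ w (x - x1) = 0 := by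
    intro x
    by_contra! h
    have h1 : ‖x - x0‖ < R := not_le.1 fun h' => h.1 (hz _ h')
    have h2 : ‖x - x1‖ < R := not_le.1 fun h' => h.2 (hz _ h')
    have := dist_triangle_left x0 x1 x
    rw [dist_eq_norm x x0, dist_eq_norm x x1] at this
    linarith
  have hfz : ∀ y, w y = 0 → fderiv ℝ w y = 0 := fun y hy =>
    IsLocalMin.fderiv_eq_zero (Filter.Eventually.of_forall fun z => by rw [hy]; exact h0 z)
  have int_t : ∀ {s : ℝ}, 0 < s → ∀ c, Integrable (fun x => w (x - c) ^ s) := fun hs c =>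
    (int_rpow hs hw.continuous hz).comp_sub_right c
  have int_g : ∀ c, Integrable (fun x => ‖fderiv ℝ w (x - c)‖ ^ p) := fun c =>
    (grad_int (by linarith) hw hz).comp_sub_right c
  let V : EuclideanSpace ℝ (Fin N) → ℝ := fun x => a * w (x - x0) - b * w (x - x1)
  have ht : ∀ c, LipschitzWith K (fun x => w (x - c)) := fun c =>
    LipschitzWith.of_dist_le_mul fun x y => by
      simpa using hw.dist_le_mul (x - c) (y - c)
  have hVl : ∃ K', LipschitzWith K' V := by
    have hm : ∀ {t : ℝ} c, 0 < t → LipschitzWith (t.toNNReal * K) (fun x => t * w (x - c)) := by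
      intro t c ht'
      refine LipschitzWith.of_dist_le_mul fun x y => ?_
      have := (ht c).dist_le_mul x y
      rw [Real.dist_eq] at this ⊢
      rw [← mul_sub, abs_mul, abs_of_pos ht', NNReal.coe_mul, Real.coe_toNNReal t ht'.le, mul_assoc]
      gcongr
    exact ⟨_, (hm x0 ha).sub (hm x1 hb)⟩
  obtain ⟨K', hK'⟩ := hVl
  have hder : ∀ᵐ x ∂volume, ‖fderiv ℝ V x‖ ^ p ≤ a ^ p * ‖fderiv ℝ w (x - x0)‖ ^ p + b ^ p * ‖fderiv ℝ w (x - x1)‖ ^ p := by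
    filter_upwards [(ht x0).ae_differentiableAt, (ht x1).ae_differentiableAt] with x d0 d1
    have e : fderiv ℝ V x = a • fderiv ℝ w (x - x0) - b • fderiv ℝ w (x - x1) := by
      have e0 : HasFDerivAt (fun x => w (x - x0)) (fderiv ℝ w (x - x0)) x := by
        have := d0.hasFDerivAt
        rwa [fderiv_comp_sub] at this
      have e1 : HasFDerivAt (fun x => w (x - x1)) (fderiv ℝ w (x - x1)) x := by
        have := d1.hasFDerivAt
        rwa [fderiv_comp_sub] at this
      exact ((e0.const_mul a).sub (e1.const_mul b)).fderiv
    have hp0 : p ≠ 0 := by linarith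
    rw [e]
    rcases hor x with h | h
    · rw [hfz _ h, smul_zero, zero_sub, norm_neg, norm_smul, Real.norm_of_nonneg hb.le, mul_rpow hb.le (norm_nonneg _), norm_zero, zero_rpow hp0, mul_zero, zero_add]
    · rw [hfz _ h, smul_zero, sub_zero, norm_smul, Real.norm_of_nonneg ha.le, mul_rpow ha.le (norm_nonneg _), norm_zero, zero_rpow hp0, mul_zero, add_zero]
  have hVq : ∀ x, |V x| ^ q = a ^ q * w (x - x0) ^ q + b ^ q * w (x - x1) ^ q := by
    intro x
    have hq0 : q ≠ 0 := by linarith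
    rcases hor x with h | h
    · simp only [V]; rw [h, mul_zero, zero_sub, abs_neg, abs_of_nonneg (mul_nonneg hb.le (h0 _)), mul_rpow hb.le (h0 _), zero_rpow hq0, mul_zero, zero_add]
    · simp only [V]; rw [h, mul_zero, sub_zero, abs_of_nonneg (mul_nonneg ha.le (h0 _)), mul_rpow ha.le (h0 _), zero_rpow hq0, mul_zero, add_zero]
  have hpw2 : ∀ {t : ℝ}, 0 ≤ t → t ^ (q - 2) * t = t ^ (q - 1) := by
    intro t ht
    rcases ht.eq_or_lt with h | h
    · rw [← h, mul_zero, zero_rpow hq1.ne']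
    · rw [← rpow_add_one h.ne']; congr 1; ring
  have hVc : ∀ x, |V x| ^ (q - 2) * V x = a ^ (q - 1) * w (x - x0) ^ (q - 1) - b ^ (q - 1) * w (x - x1) ^ (q - 1) := by
    intro x
    rcases hor x with h | h
    · simp only [V]; rw [h, mul_zero, zero_sub, abs_neg, abs_of_nonneg (mul_nonneg hb.le (h0 _)), mul_neg, hpw2 (mul_nonneg hb.le (h0 _)), mul_rpow hb.le (h0 _), zero_rpow hq1.ne', mul_zero, zero_sub]
    · simp only [V]; rw [h, mul_zero, sub_zero, abs_of_nonneg (mul_nonneg ha.le (h0 _)), hpw2 (mul_nonneg ha.le (h0 _)), mul_rpow ha.le (h0 _), zero_rpow hq1.ne', mul_zero, sub_zero]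
  have hnz : ∃ x ∈ Ω, V x ≠ 0 := by
    by_contra! hh
    have : ∀ x ∈ Ω, w (x - x0) ^ (q - 1) = 0 := by
      intro x hx
      have h1 := hh x hx
      have : w (x - x0) = 0 := by
        rcases hor x with h | h
        · exact h
        · simp only [V] at h1
          rw [h, mul_zero, sub_zero] at h1
          exact (mul_eq_zero.1 h1).resolve_left ha.ne'
      rw [this, zero_rpow hq1.ne']
    rw [hI0, setIntegral_eq_zero_of_forall_eq_zero this] at hi0
    exact hi0.false
  refine ⟨a, b, ha, hb, ?_⟩
  have hbdd : BddBelow { R : ℝ | ∃ v : EuclideanSpace ℝ (Fin N) → ℝ, ∃ K : NNReal,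
    LipschitzOnWith K v (closure Ω) ∧ (∃ x ∈ Ω, v x ≠ 0) ∧
    (∫ x in Ω, |v x| ^ (q - 2) * v x) = 0 ∧ R = rayleighQuot p q Ω v } := by
    refine ⟨0, ?_⟩
    rintro _ ⟨v, K, -, -, -, rfl⟩
    unfold rayleighQuot
    have : 0 ≤ ∫ x in Ω, ‖fderiv ℝ v x‖ ^ p := integral_nonneg fun x => by positivity
    have : 0 ≤ ∫ x in Ω, |v x| ^ q := integral_nonneg fun x => by positivity
    positivity
  refine (csInf_le hbdd ⟨V, K', hK'.lipschitzOnWith, hnz, ?_, rfl⟩).trans ?_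
  · simp only [hVc]
    rw [integral_sub ((int_t hq1 x0).const_mul _).integrableOn ((int_t hq1 x1).const_mul _).integrableOn,
      integral_const_mul, integral_const_mul, ha1, hb1, ← hI0, ← hI1, inv_mul_cancel₀ hi0.ne', inv_mul_cancel₀ hi1.ne', sub_self]
  · unfold rayleighQuot
    simp only [hVq]
    have hq0 : 0 < q := by linarith
    rw [integral_add ((int_t hq0 x0).const_mul _).integrableOn ((int_t hq0 x1).const_mul _).integrableOn,
      integral_const_mul, integral_const_mul]
    have i0 : 0 ≤ ∫ x in Ω, w (x - x0) ^ q := integral_nonneg fun x => rpow_nonneg (h0 _) _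
    have i1 : 0 ≤ ∫ x in Ω, w (x - x1) ^ q := integral_nonneg fun x => rpow_nonneg (h0 _) _
    refine div_le_div_of_nonneg_right ?_ (by positivity)
    rw [← integral_const_mul, ← integral_const_mul,
      ← integral_add ((int_g x0).const_mul _).integrableOn ((int_g x1).const_mul _).integrableOn]
    exact integral_mono_of_nonneg (ae_of_all _ fun x => by positivity)
      (((int_g x0).const_mul _).add ((int_g x1).const_mul _)).integrableOn (ae_restrict_of_ae hder)

end

open MeasureTheory Metric Set Real

section
variable {N : ℕ}
open Filter Topology Module

lemma exists_diam {Ω : Set (EuclideanSpace ℝ (Fin N))} (hb : Bornology.IsBounded Ω) (hne : Ω.Nonempty) :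
    ∃ x0 ∈ closure Ω, ∃ x1 ∈ closure Ω, dist x0 x1 = diam Ω := by
  have hc : IsCompact (closure Ω) := hb.isCompact_closure
  have hcc := hc.prod hc
  obtain ⟨z, hz, hmax⟩ := hcc.exists_isMaxOn ((hne.closure).prod hne.closure)
    (continuous_dist (α := EuclideanSpace ℝ (Fin N))).continuousOn
  refine ⟨z.1, hz.1, z.2, hz.2, le_antisymm ?_ ?_⟩
  · rw [← Metric.diam_closure]
    exact dist_le_diam_of_mem hb.closure hz.1 hz.2
  · refine diam_le_of_forall_dist_le dist_nonneg fun x hx y hy => ?_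
    have hm : (x, y) ∈ closure Ω ×ˢ closure Ω := Set.mk_mem_prod (subset_closure hx) (subset_closure hy)
    exact isMaxOn_iff.1 hmax (x, y) hm

lemma star_tr {Ω : Set (EuclideanSpace ℝ (Fin N))} (ho : IsOpen Ω) (hc : Convex ℝ Ω) {c : EuclideanSpace ℝ (Fin N)}
    (hcl : c ∈ closure Ω) : ∀ x ∈ {y | y + c ∈ Ω}, ∀ t : ℝ, 0 < t → t ≤ 1 → t • x ∈ {y | y + c ∈ Ω} := by
  intro x hx t ht ht1
  have := hc.combo_interior_closure_mem_interior (by rwa [ho.interior_eq]) hcl ht (by linarith : (0:ℝ) ≤ 1 - t) (by ring)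
    (x := x + c)
  rw [ho.interior_eq] at this
  have e : t • (x + c) + (1 - t) • c = t • x + c := by module
  rw [e] at this
  exact this

lemma int_lower {c s r : ℝ} (hc : 0 ≤ c) (hs : 0 < s) {w : EuclideanSpace ℝ (Fin N) → ℝ} (h0 : ∀ x, 0 ≤ w x)
    (hi : Integrable fun x => w x ^ s) (hcw : ∀ x, ‖x‖ ≤ r → c ≤ w x) {D : Set (EuclideanSpace ℝ (Fin N))}
    (hD : IsOpen D) : c ^ s * volume.real (D ∩ ball 0 r) ≤ ∫ x in D, w x ^ s := by
  have hm : MeasurableSet (D ∩ ball 0 r) := (hD.inter isOpen_ball).measurableSet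
  have hfin : volume (D ∩ ball 0 r) ≠ ⊤ := ((measure_mono inter_subset_right).trans_lt measure_ball_lt_top).ne
  calc c ^ s * volume.real (D ∩ ball 0 r) = ∫ x in D ∩ ball 0 r, c ^ s := by
        rw [setIntegral_const, smul_eq_mul, mul_comm]
    _ ≤ ∫ x in D ∩ ball 0 r, w x ^ s := by
        refine setIntegral_mono_on (integrableOn_const hfin) hi.integrableOn hm fun x hx => ?_
        exact rpow_le_rpow hc (hcw x (by simpa using (mem_ball_zero_iff.1 hx.2).le)) hs.le
    _ ≤ ∫ x in D, w x ^ s := setIntegral_mono_set hi.integrableOn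
        (ae_of_all _ fun x => rpow_nonneg (h0 x) _) (inter_subset_left).eventuallyLE

lemma vol_pos {U : Set (EuclideanSpace ℝ (Fin N))} {r : ℝ} (hU : IsOpen U) (hne : (U ∩ ball 0 r).Nonempty) :
    0 < volume.real (U ∩ ball 0 r) :=
  ENNReal.toReal_pos ((hU.inter isOpen_ball).measure_pos _ hne).ne'
    ((measure_mono inter_subset_right).trans_lt measure_ball_lt_top).ne

lemma mu_lt_lam (hN : 2 ≤ N) {p q : ℝ} (hp : 1 < p) (hpq : p < q) (hq : ltCritical N p q)
    {Ω : Set (EuclideanSpace ℝ (Fin N))} (hΩo : IsOpen Ω)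
    (hΩb : Bornology.IsBounded Ω) (hΩc : Convex ℝ Ω) (hΩne : Ω.Nonempty) {R : ℝ} (hR : 0 < R)
    (hd : diam Ω = 2 * R) :
    muPQ p q Ω < lambdaPQ p q (ball (0 : EuclideanSpace ℝ (Fin N)) R) := by
  have hp0 : 0 < p := by linarith
  have hq0 : 0 < q := by linarith
  have hl0 := lam_pos hN hp hpq hq hR
  set l := lambdaPQ p q (ball (0 : EuclideanSpace ℝ (Fin N)) R) with hl
  obtain ⟨c, hc, ε0, hε0, hnc⟩ := nonconc hN hp hpq hq hR hl hl0
  obtain ⟨x0, hx0, x1, hx1, hx⟩ := exists_diam hΩb hΩne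
  rw [hd] at hx
  set e := x1 - x0 with he
  have hR2 : 0 < R / 2 := by positivity
  -- the translated sets
  have hDo : ∀ z, IsOpen {y | y + z ∈ Ω} := fun z => hΩo.preimage (by fun_prop : Continuous fun y => y + z)
  have hDb : ∀ z, Bornology.IsBounded {y | y + z ∈ Ω} := fun z => by
    obtain ⟨M, hM⟩ := hΩb.exists_norm_le
    refine (isBounded_closedBall (x := (0 : EuclideanSpace ℝ (Fin N))) (r := M + ‖z‖)).subset fun y hy => ?_
    rw [mem_closedBall_zero_iff]
    have := norm_sub_le (y + z) z
    rw [add_sub_cancel_right] at this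
    linarith [hM _ hy]
  have hDn : ∀ z ∈ closure Ω, ({y | y + z ∈ Ω} ∩ ball 0 (R / 2)).Nonempty := fun z hz => by
    obtain ⟨y, hy, hyz⟩ := Metric.mem_closure_iff.1 hz _ hR2
    refine ⟨y - z, ?_, ?_⟩
    · simpa using hy
    · rw [mem_ball_zero_iff, ← dist_eq_norm, dist_comm]; exact hyz
  set D0 := {y | y + x0 ∈ Ω} with hD0
  set D1 := {y | y + x1 ∈ Ω} with hD1
  let U : Set (EuclideanSpace ℝ (Fin N)) := {x | 2 * |inner ℝ x e| < ‖x‖ ^ 2}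
  have hUo : IsOpen U := isOpen_lt (by fun_prop) (by fun_prop)
  have hUn : (U ∩ ball 0 (R / 2)).Nonempty := by
    obtain ⟨y, hy, hye⟩ : ∃ y : EuclideanSpace ℝ (Fin N), y ≠ 0 ∧ inner ℝ y e = 0 := by
      have hne : (ℝ ∙ e)ᗮ ≠ ⊥ := by
        intro hbot
        have hf := Submodule.finrank_add_finrank_orthogonal (ℝ ∙ e)
        have he0 : e ≠ 0 := by
          intro h
          rw [he] at h
          rw [sub_eq_zero.1 h, dist_self] at hx
          linarith
        rw [hbot, finrank_bot, finrank_span_singleton he0, finrank_euclideanSpace_fin] at hf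
        omega
      obtain ⟨y, hy, hy0⟩ := Submodule.exists_mem_ne_zero_of_ne_bot hne
      exact ⟨y, hy0, Submodule.mem_orthogonal_singleton_iff_inner_left.1 hy⟩
    have hyn : 0 < ‖y‖ := norm_pos_iff.2 hy
    refine ⟨(R / 4 / ‖y‖) • y, ?_, ?_⟩
    · show 2 * |inner ℝ ((R / 4 / ‖y‖) • y) e| < ‖(R / 4 / ‖y‖) • y‖ ^ 2
      rw [inner_smul_left, hye, mul_zero, abs_zero, mul_zero, norm_smul, Real.norm_of_nonneg (by positivity)]
      positivity
    · rw [mem_ball_zero_iff, norm_smul, Real.norm_of_nonneg (by positivity), div_mul_cancel₀ _ hyn.ne']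
      linarith
  have hen : ‖e‖ = 2 * R := by rw [he, ← dist_eq_norm, dist_comm, hx]
  have hdl : ∀ z ∈ closure Ω, ∀ y ∈ Ω, dist y z ≤ 2 * R := fun z hz y hy => by
    rw [← hd, ← Metric.diam_closure]
    exact dist_le_diam_of_mem hΩb.closure (subset_closure hy) hz
  have hD0e : ∀ x ∈ D0, ‖x‖ ^ 2 ≤ 2 * inner ℝ x e := fun x hx' => by
    have := hdl x1 hx1 _ hx'
    rw [dist_eq_norm, show x + x0 - x1 = x - e by rw [he]; abel, ← hen] at this
    have h2 := pow_le_pow_left₀ (norm_nonneg _) this 2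
    rw [norm_sub_sq_real] at h2
    linarith
  have hD1e : ∀ x ∈ D1, ‖x‖ ^ 2 ≤ - (2 * inner ℝ x e) := fun x hx' => by
    have := hdl x0 hx0 _ hx'
    rw [dist_eq_norm, show x + x1 - x0 = x + e by rw [he]; abel, ← hen] at this
    have h2 := pow_le_pow_left₀ (norm_nonneg _) this 2
    rw [norm_add_sq_real] at h2
    linarith
  set u := volume.real (U ∩ ball 0 (R / 2)) with hu
  set v0 := volume.real (D0 ∩ ball 0 (R / 2)) with hv0
  set v1 := volume.real (D1 ∩ ball 0 (R / 2)) with hv1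
  have hu0 : 0 < u := vol_pos hUo hUn
  have hv00 : 0 < v0 := vol_pos (hDo _) (hDn _ hx0)
  have hv10 : 0 < v1 := vol_pos (hDo _) (hDn _ hx1)
  set k0 := c ^ q * v0 with hk0
  set k1 := c ^ q * v1 with hk1
  set δ := c ^ q * u with hδ
  have hk00 : 0 < k0 := by positivity
  have hk10 : 0 < k1 := by positivity
  have hδ0 : 0 < δ := by positivity
  -- estimate for all small ε
  have main : ∀ ε, 0 < ε → ε ≤ ε0 → k0 + k1 ≤ 1 - δ ∧
      muPQ p q Ω ≤ l * (1 - δ) ^ (1 - p / q) + ε * (k0 ^ (-(p / q)) + k1 ^ (-(p / q))) := by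
    intro ε hε hεε
    obtain ⟨w, K, hw, h0, hz, hm, h1, h2⟩ := near_min hN (q := q) hp hpq hR hε
    have hcw := hnc ε hεε K w hw h0 hz hm h1 h2
    have hi : ∀ {s : ℝ}, 0 < s → Integrable fun x => w x ^ s := fun hs => int_rpow hs hw.continuous hz
    have m0 : k0 ≤ ∫ x in D0, w x ^ q := int_lower hc.le hq0 h0 (hi hq0) hcw (hDo _)
    have m1 : k1 ≤ ∫ x in D1, w x ^ q := int_lower hc.le hq0 h0 (hi hq0) hcw (hDo _)
    have mU : δ ≤ ∫ x in U, w x ^ q := int_lower hc.le hq0 h0 (hi hq0) hcw hUo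
    have hq1 : 0 < q - 1 := by linarith
    have i0 : 0 < ∫ x in D0, w x ^ (q - 1) :=
      lt_of_lt_of_le (by positivity) (int_lower hc.le hq1 h0 (hi hq1) hcw (hDo _))
    have i1 : 0 < ∫ x in D1, w x ^ (q - 1) :=
      lt_of_lt_of_le (by positivity) (int_lower hc.le hq1 h0 (hi hq1) hcw (hDo _))
    have hsum : (∫ x in D0, w x ^ q) + (∫ x in D1, w x ^ q) ≤ 1 - δ := by
      have hnn : ∀ x, 0 ≤ w x ^ q := fun x => rpow_nonneg (h0 x) _
      have d1 : AEDisjoint volume D0 D1 := by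
        have : Nontrivial (EuclideanSpace ℝ (Fin N)) := by
          obtain ⟨y, hy⟩ := exists_norm hN zero_le_one
          exact ⟨y, 0, fun h => by rw [h, norm_zero] at hy; exact zero_ne_one hy⟩
        refine measure_mono_null (t := {0}) (fun x hx' => ?_) (measure_singleton _)
        have h3 := hD0e x hx'.1
        have h4 := hD1e x hx'.2
        have : ‖x‖ ^ 2 ≤ 0 := by linarith
        have : ‖x‖ = 0 := by nlinarith [norm_nonneg x]
        simpa using this
      have d2 : Disjoint (D0 ∪ D1) U := by
        rw [Set.disjoint_left]
        rintro x (hx' | hx') (hxU : 2 * |inner ℝ x e| < ‖x‖ ^ 2)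
        · linarith [hD0e x hx', le_abs_self (inner ℝ x e)]
        · linarith [hD1e x hx', neg_abs_le (inner ℝ x e)]
      have e1 := setIntegral_union₀ d1 (hDo x1).measurableSet.nullMeasurableSet (hi hq0).integrableOn (hi hq0).integrableOn
      have e2 := setIntegral_union d2 hUo.measurableSet (hi hq0).integrableOn (hi hq0).integrableOn
      have e3 := setIntegral_le_integral (s := (D0 ∪ D1) ∪ U) (hi hq0) (ae_of_all _ hnn)
      beta_reduce at e1 e2 e3
      rw [h1] at e3
      linarith
    refine ⟨by linarith, ?_⟩
    obtain ⟨a, b, ha, hb, hmu⟩ := mu_test (Ω := Ω) hp hpq hw h0 hz hx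
      (by rw [set_trans Ω hΩo (fun x => w x ^ (q - 1)) x0]; exact i0)
      (by rw [set_trans Ω hΩo (fun x => w x ^ (q - 1)) x1]; exact i1)
    rw [set_trans Ω hΩo (fun x => w x ^ q) x0, set_trans Ω hΩo (fun x => w x ^ q) x1,
      set_trans Ω hΩo (fun x => ‖fderiv ℝ w x‖ ^ p) x0, set_trans Ω hΩo (fun x => ‖fderiv ℝ w x‖ ^ p) x1] at hmu
    have s0 := star_est hN hp0 hpq hR hw h0 hz hm h1 hl hl0.le hε.le h2 (hDo x0) (star_tr hΩo hΩc hx0) (hDb x0)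
    have s1 := star_est hN hp0 hpq hR hw h0 hz hm h1 hl hl0.le hε.le h2 (hDo x1) (star_tr hΩo hΩc hx1) (hDb x1)
    refine hmu.trans ((div_le_div_of_nonneg_right ?_ ?_).trans
      (fin_alg hp0 hpq ha hb hk00 hk10 m0 m1 hsum hl0.le hε.le))
    · gcongr
    · have : 0 < ∫ x in D0, w x ^ q := hk00.trans_le m0
      have : 0 < ∫ x in D1, w x ^ q := hk10.trans_le m1
      positivity
  have hδ1 : 0 ≤ 1 - δ := by linarith [(main ε0 hε0 le_rfl).1]
  have hθ : 0 < 1 - p / q := by rw [sub_pos, div_lt_one hq0]; exact hpq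
  have hlt : (1 - δ) ^ (1 - p / q) < 1 := rpow_lt_one hδ1 (by linarith) hθ
  set S := k0 ^ (-(p / q)) + k1 ^ (-(p / q)) with hS
  have hS0 : 0 < S := by positivity
  set g := l - l * (1 - δ) ^ (1 - p / q) with hg
  have hg0 : 0 < g := by rw [hg]; nlinarith
  have hm1 := (main (min ε0 (g / (2 * S))) (lt_min hε0 (by positivity)) (min_le_left _ _)).2
  have : min ε0 (g / (2 * S)) * S ≤ g / 2 := by
    calc _ ≤ g / (2 * S) * S := by gcongr; exact min_le_right _ _
      _ = g / 2 := by field_simp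
  linarith

end

theorem muPQ_lt_lambdaPQ_ball_diam {N : ℕ} (hN : 2 ≤ N) (p q : ℝ) (hp : 1 < p)
    (hpq : p < q) (hq : ltCritical N p q)
    (Ω : Set (EuclideanSpace ℝ (Fin N))) (hΩo : IsOpen Ω)
    (hΩb : Bornology.IsBounded Ω) (hΩc : Convex ℝ Ω) (hΩne : Ω.Nonempty)
    (c : EuclideanSpace ℝ (Fin N)) (r : ℝ) (hr : 0 < r) :
    muPQ p q Ω < lambdaPQ p q (ball c r) *
      (diam (ball c r) / diam Ω) ^ (p + N * p / q - N) := by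
  have : Nontrivial (EuclideanSpace ℝ (Fin N)) := by
    obtain ⟨y, hy⟩ := exists_norm hN zero_le_one
    exact ⟨y, 0, fun h => by rw [h, norm_zero] at hy; exact zero_ne_one hy⟩
  have hdp : 0 < diam Ω := by
    obtain ⟨z, hz⟩ := hΩne
    obtain ⟨ρ, hρ, hsub⟩ := Metric.isOpen_iff.1 hΩo z hz
    have := diam_mono hsub hΩb
    rw [Metric.diam_ball_eq z hρ.le] at this
    linarith
  have hR : 0 < diam Ω / 2 := by positivity
  have h1 := mu_lt_lam hN hp hpq hq hΩo hΩb hΩc hΩne hR (by ring)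
  refine h1.trans_le ((lam_scale (by linarith) (by linarith) hr hR c).trans (le_of_eq ?_))
  rw [Metric.diam_ball_eq c hr.le]
  congr 2
  field_simp
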